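/- arXiv:1805.06218 — 8 statements merged into one kernel-verified Lean document; each statement's English description precedes it below -/
import Mathlib

section
/- Let A and B be positive definite complex matrices such that s·A ≤ B ≤ t·A for some scalars 0 < s ≤ t with s·t ≥ 1. Then (2/(√s+√t))·(A ∇ B) ≤ A ♯ B and A ♯ B ≤ ((√s+√t)/2)·(A ! B). -/
open Matrix ComplexOrder

/-- Loewner order: `A ≤ B` iff `B - A` is positive semidefinite. -/
def LoewnerLE {n : Type} [Fintype n] (A B : Matrix n n ℂ) : Prop := (B - A).PosSemidef

/-- The positive square root of a (Hermitian) matrix, via the continuous functional calculus. -/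
noncomputable def msqrt {n : Type} [Fintype n] [DecidableEq n] (A : Matrix n n ℂ) :
    Matrix n n ℂ := cfc Real.sqrt A

/-- The arithmetic mean `A ∇ B = (A + B)/2`. -/
noncomputable def amean {n : Type} [Fintype n] [DecidableEq n] (A B : Matrix n n ℂ) :
    Matrix n n ℂ := (2 : ℝ)⁻¹ • (A + B)

/-- The harmonic mean `A ! B = ((A⁻¹ + B⁻¹)/2)⁻¹`. -/
noncomputable def hmean {n : Type} [Fintype n] [DecidableEq n] (A B : Matrix n n ℂ) :
    Matrix n n ℂ := ((2 : ℝ)⁻¹ • (A⁻¹ + B⁻¹))⁻¹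

/-- The geometric mean `A ♯ B = A^(1/2) (A^(-1/2) B A^(-1/2))^(1/2) A^(1/2)`. -/
noncomputable def gmean {n : Type} [Fintype n] [DecidableEq n] (A B : Matrix n n ℂ) :
    Matrix n n ℂ := msqrt A * msqrt ((msqrt A)⁻¹ * B * (msqrt A)⁻¹) * msqrt A

/-- `f : ℝ → ℝ` is operator monotone on `[0,∞)`: it is continuous and nonnegative on `[0,∞)`
and monotone on positive-semidefinite complex matrices of every finite size, with `f` applied
via the continuous functional calculus. -/
def OpMonotone (f : ℝ → ℝ) : Prop :=
  ContinuousOn f (Set.Ici 0) ∧ (∀ x : ℝ, 0 ≤ x → 0 ≤ f x) ∧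
    ∀ (k : Type) [Fintype k] [DecidableEq k] (X Y : Matrix k k ℂ),
      X.PosSemidef → LoewnerLE X Y → LoewnerLE (cfc f X) (cfc f Y)

/-- `g : ℝ → ℝ` is operator monotone decreasing on `(0,∞)`: it is continuous and nonnegative on
`(0,∞)` and antitone on positive-definite complex matrices of every finite size, with `g` applied
via the continuous functional calculus. -/
def OpAntitone (g : ℝ → ℝ) : Prop :=
  ContinuousOn g (Set.Ioi 0) ∧ (∀ x : ℝ, 0 < x → 0 ≤ g x) ∧
    ∀ (k : Type) [Fintype k] [DecidableEq k] (X Y : Matrix k k ℂ),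
      X.PosDef → Y.PosDef → LoewnerLE X Y → LoewnerLE (cfc g Y) (cfc g X)


open scoped MatrixOrder in
theorem ps_aux {n : Type} [Fintype n] [DecidableEq n]
    (C : Matrix n n ℂ) (hC : C.PosDef)
    (s t : ℝ) (hs : 0 < s) (h1 : 1 ≤ s * t)
    (hsC : LoewnerLE (s • (1 : Matrix n n ℂ)) C) (htC : LoewnerLE C (t • (1 : Matrix n n ℂ))) :
    ((Real.sqrt s + Real.sqrt t) • msqrt C - (1 + C)).PosSemidef ∧
    (((Real.sqrt s + Real.sqrt t)) • (1 + C⁻¹)⁻¹ - msqrt C).PosSemidef := by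
  have hCs : IsSelfAdjoint C := hC.isHermitian
  have hcont : ∀ f : ℝ → ℝ, ContinuousOn f (spectrum ℝ C) := fun f =>
    (Matrix.finite_real_spectrum (A := C)).continuousOn f
  have hlo : ∀ x ∈ spectrum ℝ C, s ≤ x := by
    apply (algebraMap_le_iff_le_spectrum (r := s) (a := C)).1
    rw [Algebra.algebraMap_eq_smul_one]
    exact hsC
  have hhi : ∀ x ∈ spectrum ℝ C, x ≤ t := by
    apply (le_algebraMap_iff_spectrum_le (r := t) (a := C)).1
    rw [Algebra.algebraMap_eq_smul_one]
    exact htC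
  have key : ∀ x ∈ spectrum ℝ C, 1 + x ≤ (√s + √t) * √x := by
    intro x hx
    have h2 := hlo x hx
    have h3 := hhi x hx
    have h4 : √s ≤ √x := Real.sqrt_le_sqrt h2
    have h5 : √x ≤ √t := Real.sqrt_le_sqrt h3
    have h6 : √x * √x = x := Real.mul_self_sqrt (by linarith)
    have h7 : 1 ≤ √s * √t := by
      rw [← Real.sqrt_mul hs.le]; exact Real.one_le_sqrt.2 h1
    nlinarith [mul_nonneg (sub_nonneg.2 h4) (sub_nonneg.2 h5)]
  have hid : cfc (fun x : ℝ => x) C = C := cfc_id' ℝ C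
  have hone : cfc (fun _ : ℝ => (1:ℝ)) C = 1 := cfc_const_one ℝ C
  have hinv : C⁻¹ = cfc (fun x : ℝ => x⁻¹) C := by
    apply Matrix.inv_eq_right_inv
    nth_rewrite 1 [← hid]
    rw [← cfc_mul _ _ C (hcont _) (hcont _), ← hone]
    apply cfc_congr
    intro x hx
    have := hlo x hx
    have : x ≠ 0 := by linarith
    simp [this]
  have hinv2 : (1 + C⁻¹)⁻¹ = cfc (fun x : ℝ => x / (1 + x)) C := by
    apply Matrix.inv_eq_right_inv
    rw [hinv]
    nth_rewrite 1 [← hone]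
    rw [← cfc_add _ _ _ (hcont _) (hcont _), ← cfc_mul _ _ C (hcont _) (hcont _), ← hone]
    apply cfc_congr
    intro x hx
    have := hlo x hx
    have h1 : x ≠ 0 := by linarith
    have h2 : 1 + x ≠ 0 := by linarith
    simp only
    field_simp
    ring
  constructor
  · have : (√s + √t) • msqrt C - (1 + C) = cfc (fun x : ℝ => (√s + √t) * √x - (1 + x)) C := by
      rw [cfc_sub _ _ _ (hcont _) (hcont _), cfc_const_mul _ _ _ (hcont _),
        cfc_add _ _ _ (hcont _) (hcont _), hid, hone]
      rfl
    rw [this, ← Matrix.nonneg_iff_posSemidef]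
    apply cfc_nonneg
    intro x hx
    linarith [key x hx]
  · have : (√s + √t) • (1 + C⁻¹)⁻¹ - msqrt C
        = cfc (fun x : ℝ => (√s + √t) * (x / (1 + x)) - √x) C := by
      rw [cfc_sub _ _ _ (hcont _) (hcont _), cfc_const_mul _ _ _ (hcont _), hinv2]
      rfl
    rw [this, ← Matrix.nonneg_iff_posSemidef]
    apply cfc_nonneg
    intro x hx
    have h2 := key x hx
    have h3 := hlo x hx
    have h4 : 0 < 1 + x := by linarith
    have h6 : √x * √x = x := Real.mul_self_sqrt (by linarith)
    have h7 := Real.sqrt_nonneg x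
    rw [sub_nonneg, ← mul_div_assoc, le_div_iff₀ h4]
    calc √x * (1 + x) ≤ √x * ((√s + √t) * √x) := by gcongr
      _ = (√s + √t) * (√x * √x) := by ring
      _ = _ := by rw [h6]

open scoped MatrixOrder in
theorem ps_sqrt {n : Type} [Fintype n] [DecidableEq n]
    (A : Matrix n n ℂ) (hA : A.PosDef) :
    (msqrt A).IsHermitian ∧ msqrt A * msqrt A = A ∧ IsUnit (msqrt A).det := by
  have hAs : IsSelfAdjoint A := hA.isHermitian
  have hcont : ∀ f : ℝ → ℝ, ContinuousOn f (spectrum ℝ A) := fun f =>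
    (Matrix.finite_real_spectrum (A := A)).continuousOn f
  have h2 : msqrt A * msqrt A = A := by
    unfold msqrt
    rw [← cfc_mul _ _ A (hcont _) (hcont _)]
    conv_rhs => rw [← cfc_id' ℝ A]
    apply cfc_congr
    intro x hx
    have hA0 : 0 ≤ A := Matrix.nonneg_iff_posSemidef.2 hA.posSemidef
    exact Real.mul_self_sqrt (spectrum_nonneg_of_nonneg hA0 hx)
  refine ⟨cfc_predicate (p := IsSelfAdjoint) _ A, h2, ?_⟩
  have h3 : IsUnit A.det := hA.det_pos.ne'.isUnit
  rw [← h2, Matrix.det_mul] at h3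
  exact isUnit_of_mul_isUnit_left h3

theorem polya_szego_lemma_st_ge_one {n : Type} [Fintype n] [DecidableEq n]
    (A B : Matrix n n ℂ) (hA : A.PosDef) (hB : B.PosDef)
    (s t : ℝ) (hs : 0 < s) (hst : s ≤ t) (h1 : 1 ≤ s * t)
    (hsA : LoewnerLE (s • A) B) (htA : LoewnerLE B (t • A)) :
    LoewnerLE ((2 / (Real.sqrt s + Real.sqrt t)) • amean A B) (gmean A B) ∧
      LoewnerLE (gmean A B) (((Real.sqrt s + Real.sqrt t) / 2) • hmean A B) := by
  obtain ⟨hR, hRR, hu⟩ := ps_sqrt A hA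
  unfold gmean amean hmean
  set R := msqrt A with hRdef
  have hRi : R⁻¹.IsHermitian := hR.inv
  have e1 : R * R⁻¹ = 1 := Matrix.mul_nonsing_inv R hu
  have e2 : R⁻¹ * R = 1 := Matrix.nonsing_inv_mul R hu
  have conj : ∀ (X S : Matrix n n ℂ), S.IsHermitian → X.PosSemidef → (S * X * S).PosSemidef := by
    intro X S hS hX
    have := hX.mul_mul_conjTranspose_same S
    rwa [hS.eq] at this
  have hA1 : R⁻¹ * A * R⁻¹ = 1 := by
    rw [← hRR, ← mul_assoc, e2, one_mul, e1]
  obtain ⟨C, hCdef⟩ : ∃ C, C = R⁻¹ * B * R⁻¹ := ⟨_, rfl⟩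
  have hBC : B = R * C * R := by
    rw [hCdef]
    calc B = 1 * B * 1 := by simp
      _ = (R * R⁻¹) * B * (R⁻¹ * R) := by rw [e1, e2]
      _ = _ := by simp only [mul_assoc]
  have hCu : IsUnit C.det := by
    have h3 : IsUnit B.det := hB.det_pos.ne'.isUnit
    rw [hBC, Matrix.det_mul, Matrix.det_mul] at h3
    exact isUnit_of_mul_isUnit_right (isUnit_of_mul_isUnit_left h3)
  have hC : C.PosDef := by
    have : C.PosSemidef := hCdef ▸ conj B _ hRi hB.posSemidef
    exact this.posDef_iff_isUnit.2 ((Matrix.isUnit_iff_isUnit_det C).2 hCu)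
  rw [← hCdef]
  have hsC : LoewnerLE (s • (1 : Matrix n n ℂ)) C := by
    have := conj _ _ hRi hsA
    unfold LoewnerLE
    convert this using 1
    rw [mul_sub, sub_mul, ← hCdef, mul_smul_comm, smul_mul_assoc, hA1]
  have htC : LoewnerLE C (t • (1 : Matrix n n ℂ)) := by
    have := conj _ _ hRi htA
    unfold LoewnerLE
    convert this using 1
    rw [mul_sub, sub_mul, ← hCdef, mul_smul_comm, smul_mul_assoc, hA1]
  obtain ⟨p1, p2⟩ := ps_aux C hC s t hs h1 hsC htC
  have hpos : 0 < √s + √t := by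
    have := Real.sqrt_pos.2 hs
    have := Real.sqrt_nonneg t
    linarith
  generalize √s + √t = c at *
  constructor
  · have := (conj _ _ hR p1).smul (inv_pos.2 hpos).le
    unfold LoewnerLE
    convert this using 1
    rw [mul_sub, sub_mul, mul_add, add_mul, ← hBC, mul_one, hRR, mul_smul_comm, smul_mul_assoc,
      smul_sub, smul_smul, smul_smul, inv_mul_cancel₀ hpos.ne', one_smul]
    congr 2
    field_simp
  · have hinv : ((2 : ℝ)⁻¹ • (A⁻¹ + B⁻¹))⁻¹ = (2:ℝ) • (R * (1 + C⁻¹)⁻¹ * R) := by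
      have hAB : A⁻¹ + B⁻¹ = R⁻¹ * (1 + C⁻¹) * R⁻¹ := by
        rw [← hRR, hBC, Matrix.mul_inv_rev, Matrix.mul_inv_rev, Matrix.mul_inv_rev, mul_add,
          add_mul, mul_one, mul_assoc R⁻¹ C⁻¹]
      have hD : (1 + C⁻¹) * (1 + C⁻¹)⁻¹ = 1 := by
        apply Matrix.mul_nonsing_inv
        exact (Matrix.PosDef.one.add hC.inv).det_pos.ne'.isUnit
      apply Matrix.inv_eq_right_inv
      rw [hAB, smul_mul_assoc, mul_smul_comm, smul_smul, inv_mul_cancel₀ two_ne_zero, one_smul]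
      calc _ = R⁻¹ * ((1 + C⁻¹) * (R⁻¹ * R) * (1 + C⁻¹)⁻¹) * R := by simp only [mul_assoc]
        _ = 1 := by rw [e2, mul_one, hD, mul_one, e2]
    have := conj _ _ hR p2
    unfold LoewnerLE
    rw [hinv]
    convert this using 1
    rw [mul_sub, sub_mul, mul_smul_comm, smul_mul_assoc, smul_smul]
    congr 2
    field_simp
end

section
/- Let A and B be positive definite complex matrices such that s·A ≤ B ≤ t·A for some scalars 0 < s ≤ t with s·t ≤ 1. Then (2√(st)/(√s+√t))·(A ∇ B) ≤ A ♯ B and A ♯ B ≤ ((√s+√t)/(2√(st)))·(A ! B). -/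
open Matrix ComplexOrder

open scoped MatrixOrder in
theorem psz_spec {n : Type} [Fintype n] [DecidableEq n] (C : Matrix n n ℂ) (hC : C.IsHermitian)
    (s t : ℝ) (h1 : LoewnerLE (s • 1) C) (h2 : LoewnerLE C (t • 1)) :
    ∀ x ∈ spectrum ℝ C, s ≤ x ∧ x ≤ t := by
  have hsa : IsSelfAdjoint C := hC
  intro x hx
  constructor
  · refine (algebraMap_le_iff_le_spectrum (r := s) (a := C) hsa).1 ?_ x hx
    rw [Algebra.algebraMap_eq_smul_one]
    exact h1
  · refine (le_algebraMap_iff_spectrum_le (r := t) (a := C) hsa).1 ?_ x hx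
    rw [Algebra.algebraMap_eq_smul_one]
    exact h2

theorem psz_cont {n : Type} [Fintype n] [DecidableEq n] (C : Matrix n n ℂ) (f : ℝ → ℝ) :
    ContinuousOn f (spectrum ℝ C) := (Matrix.finite_real_spectrum (A := C)).continuousOn f

open scoped MatrixOrder in
theorem psz_le {n : Type} [Fintype n] [DecidableEq n] (C : Matrix n n ℂ) (f g : ℝ → ℝ)
    (h : ∀ x ∈ spectrum ℝ C, f x ≤ g x) : LoewnerLE (cfc f C) (cfc g C) :=
  cfc_mono h (psz_cont C f) (psz_cont C g)

theorem psz_conj {n : Type} [Fintype n] [DecidableEq n] (R X Y : Matrix n n ℂ)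
    (hR : R.IsHermitian) (h : LoewnerLE X Y) : LoewnerLE (R * X * R) (R * Y * R) := by
  have := h.mul_mul_conjTranspose_same R
  rw [hR.eq, mul_sub, sub_mul] at this
  exact this

theorem psz_mul_one {n : Type} [Fintype n] [DecidableEq n] (C : Matrix n n ℂ)
    (hC : C.IsHermitian) (f g : ℝ → ℝ)
    (h : ∀ x ∈ spectrum ℝ C, f x * g x = 1) : cfc f C * cfc g C = 1 := by
  have hsa : IsSelfAdjoint C := hC
  rw [← cfc_mul f g C (psz_cont C f) (psz_cont C g), ← cfc_one ℝ C hsa]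
  exact cfc_congr h

open scoped MatrixOrder in
theorem psz_sqrt {n : Type} [Fintype n] [DecidableEq n] (A : Matrix n n ℂ) (hA : A.PosDef) :
    (msqrt A).IsHermitian ∧ msqrt A * msqrt A = A := by
  have hsa : IsSelfAdjoint A := hA.isHermitian
  refine ⟨cfc_predicate Real.sqrt A, ?_⟩
  unfold msqrt
  rw [← cfc_mul _ _ A (psz_cont A _) (psz_cont A _)]
  conv_rhs => rw [← cfc_id ℝ A hsa]
  refine cfc_congr fun x hx => ?_
  exact Real.mul_self_sqrt (spectrum_nonneg_of_nonneg
    (Matrix.nonneg_iff_posSemidef.2 hA.posSemidef) hx)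

theorem psz_scalar (s t x : ℝ) (hs : 0 < s) (h1 : s * t ≤ 1) (hx1 : s ≤ x) (hx2 : x ≤ t) :
    √(s * t) * (1 + x) ≤ √x * (√s + √t) := by
  have hx : 0 ≤ x := by linarith
  have ht : 0 ≤ t := by linarith
  rw [Real.sqrt_mul hs.le]
  have a1 := Real.sqrt_le_sqrt hx1
  have a2 := Real.sqrt_le_sqrt hx2
  have a3 := Real.sq_sqrt hx
  have a4 : √s * √t ≤ 1 := by
    rw [← Real.sqrt_mul hs.le]; exact Real.sqrt_le_one.2 h1
  have := mul_nonneg (sub_nonneg.2 a1) (sub_nonneg.2 a2)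
  have := mul_le_mul_of_nonneg_right a4 hx
  nlinarith

theorem polya_szego_lemma_st_le_one {n : Type} [Fintype n] [DecidableEq n]
    (A B : Matrix n n ℂ) (hA : A.PosDef) (hB : B.PosDef)
    (s t : ℝ) (hs : 0 < s) (hst : s ≤ t) (h1 : s * t ≤ 1)
    (hsA : LoewnerLE (s • A) B) (htA : LoewnerLE B (t • A)) :
    LoewnerLE ((2 * Real.sqrt (s * t) / (Real.sqrt s + Real.sqrt t)) • amean A B) (gmean A B) ∧
      LoewnerLE (gmean A B) (((Real.sqrt s + Real.sqrt t) / (2 * Real.sqrt (s * t))) • hmean A B) := by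
  obtain ⟨hR, hRR⟩ := psz_sqrt A hA
  unfold gmean
  set R := msqrt A with hRdef
  have hRu : IsUnit R.det := by
    have h := (Matrix.isUnit_iff_isUnit_det _).1 hA.isUnit
    rw [← hRR, Matrix.det_mul] at h
    exact isUnit_of_mul_isUnit_left h
  have e1 : R * R⁻¹ = 1 := Matrix.mul_nonsing_inv R hRu
  have e2 : R⁻¹ * R = 1 := Matrix.nonsing_inv_mul R hRu
  have hRi : (R⁻¹).IsHermitian := hR.inv
  set C := R⁻¹ * B * R⁻¹ with hCdef
  have hBC : B = R * C * R := by
    calc B = (R * R⁻¹) * B * (R⁻¹ * R) := by rw [e1, e2, one_mul, mul_one]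
      _ = _ := by rw [hCdef]; noncomm_ring
  have hC : C.IsHermitian := by
    have := Matrix.isHermitian_mul_mul_conjTranspose R⁻¹ hB.isHermitian
    rwa [hRi.eq] at this
  have e3 : R⁻¹ * A * R⁻¹ = 1 := by
    calc R⁻¹ * A * R⁻¹ = (R⁻¹ * R) * (R * R⁻¹) := by rw [← hRR]; noncomm_ring
      _ = 1 := by rw [e1, e2, one_mul]
  have hspec : ∀ x ∈ spectrum ℝ C, s ≤ x ∧ x ≤ t := by
    apply psz_spec C hC
    · have := psz_conj R⁻¹ _ _ hRi hsA
      rwa [Matrix.mul_smul, Matrix.smul_mul, e3] at this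
    · have := psz_conj R⁻¹ _ _ hRi htA
      rwa [Matrix.mul_smul, Matrix.smul_mul, e3] at this
  have hsa : IsSelfAdjoint C := hC
  have ht : 0 < t := hs.trans_le hst
  have hp : 0 < √(s * t) := Real.sqrt_pos.2 (mul_pos hs ht)
  have hq : 0 < √s + √t := add_pos (Real.sqrt_pos.2 hs) (Real.sqrt_pos.2 ht)
  have hid : cfc (fun x : ℝ => x) C = C := cfc_id' ℝ C hsa
  constructor
  · set k := 2 * √(s * t) / (√s + √t) with hk
    have h := psz_le C (fun x => k * (2⁻¹ * (1 + x))) Real.sqrt (fun x hx => by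
      have := psz_scalar s t x hs h1 (hspec x hx).1 (hspec x hx).2
      have : k * (2⁻¹ * (1 + x)) = (√(s * t) * (1 + x)) / (√s + √t) := by
        rw [hk]; field_simp
      rw [this, div_le_iff₀ hq]; assumption)
    rw [cfc_const_mul _ _ _ (psz_cont C _), cfc_const_mul _ _ _ (psz_cont C _),
      cfc_const_add _ _ _ (psz_cont C _) hsa, hid, map_one] at h
    rw [show cfc Real.sqrt C = msqrt C from rfl] at h
    have h := psz_conj R _ _ hR h
    convert h using 1
    unfold amean
    conv_lhs => rw [hBC, ← hRR]
    simp only [Matrix.mul_smul, Matrix.smul_mul, mul_add, add_mul, mul_one]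
  · set k := (√s + √t) / (2 * √(s * t)) with hk
    have h := psz_le C Real.sqrt (fun x => k * (2 * x / (1 + x))) (fun x hx => by
      have h3 := psz_scalar s t x hs h1 (hspec x hx).1 (hspec x hx).2
      have hx0 : 0 < x := hs.trans_le (hspec x hx).1
      have : k * (2 * x / (1 + x)) = x * (√s + √t) / (√(s * t) * (1 + x)) := by
        rw [hk]; field_simp
      rw [this, le_div_iff₀ (by positivity)]
      calc √x * (√(s * t) * (1 + x)) ≤ √x * (√x * (√s + √t)) := by gcongr
        _ = (√x * √x) * (√s + √t) := by ring
        _ = _ := by rw [Real.mul_self_sqrt hx0.le])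
    rw [cfc_const_mul _ _ _ (psz_cont C _)] at h
    rw [show cfc Real.sqrt C = msqrt C from rfl] at h
    have h := psz_conj R _ _ hR h
    convert h using 1
    rw [Matrix.mul_smul, Matrix.smul_mul]
    congr 1
    have hx0 : ∀ x ∈ spectrum ℝ C, x ≠ 0 := fun x hx => (hs.trans_le (hspec x hx).1).ne'
    have hCi : C⁻¹ = cfc (fun x : ℝ => x⁻¹) C := by
      apply Matrix.inv_eq_right_inv
      have := psz_mul_one C hC (fun x => x) (fun x => x⁻¹)
        (fun x hx => mul_inv_cancel₀ (hx0 x hx))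
      rwa [hid] at this
    have hD := psz_mul_one C hC (fun x => 2⁻¹ * (1 + x⁻¹)) (fun x => 2 * x / (1 + x))
      (fun x hx => by
        have := hs.trans_le (hspec x hx).1
        field_simp
        try ring)
    rw [cfc_const_mul _ _ _ (psz_cont C _),
      cfc_const_add _ _ _ (psz_cont C _) hsa, ← hCi, map_one] at hD
    unfold hmean
    apply Matrix.inv_eq_right_inv
    set H := cfc (fun x : ℝ => 2 * x / (1 + x)) C
    have hAi : A⁻¹ = R⁻¹ * R⁻¹ := by rw [← hRR, Matrix.mul_inv_rev]
    have hBi : B⁻¹ = R⁻¹ * C⁻¹ * R⁻¹ := by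
      conv_lhs => rw [hBC]
      rw [Matrix.mul_inv_rev, Matrix.mul_inv_rev, mul_assoc]
    have : (2 : ℝ)⁻¹ • (A⁻¹ + B⁻¹) = R⁻¹ * ((2 : ℝ)⁻¹ • (1 + C⁻¹)) * R⁻¹ := by
      rw [hAi, hBi]
      simp only [Matrix.mul_smul, Matrix.smul_mul, mul_add, add_mul, mul_one]
    rw [this]
    set D := (2 : ℝ)⁻¹ • (1 + C⁻¹)
    calc R⁻¹ * D * R⁻¹ * (R * H * R) = R⁻¹ * D * (R⁻¹ * R) * H * R := by noncomm_ring
      _ = R⁻¹ * (D * H) * R := by rw [e2]; noncomm_ring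
      _ = 1 := by rw [hD, mul_one, e2]
end

section
/- Let f : ℝ → ℝ be operator monotone on [0,∞). Then for every real α ≥ 1 and every real t ≥ 0, one has f(α·t) ≤ α·f(t). -/
open Matrix ComplexOrder

lemma psd_two (p q r : ℝ) (hp : 0 < p) (h : r ^ 2 ≤ p * q) :
    (!![(p : ℂ), (r : ℂ); (r : ℂ), (q : ℂ)]).PosSemidef := by
  have h1 := (posSemidef_vecMulVec_self_star ![(p : ℂ), (r : ℂ)]).smul
    (a := p⁻¹) (by positivity)
  have hd : 0 ≤ q - r ^ 2 / p := by
    rw [sub_nonneg, div_le_iff₀ hp]; linarith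
  have h2 : (Matrix.diagonal ![(0 : ℂ), ((q - r ^ 2 / p : ℝ) : ℂ)]).PosSemidef := by
    rw [posSemidef_diagonal_iff]
    intro i
    fin_cases i
    · simp
    · simp only [Fin.mk_one, cons_val_one, cons_val_fin_one]
      exact_mod_cast hd
  have h3 := h1.add h2
  convert h3 using 1
  have hpc : (p : ℂ) ≠ 0 := by exact_mod_cast hp.ne'
  ext i j
  fin_cases i <;> fin_cases j <;> simp [vecMulVec, Matrix.diagonal] <;> field_simp
  ring

lemma cfc_two (f : ℝ → ℝ) (A : Matrix (Fin 2) (Fin 2) ℂ) (hA : A.IsHermitian) (x y : ℝ)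
    (hxy : x ≠ y) (h : (A - algebraMap ℝ _ x) * (A - algebraMap ℝ _ y) = 0) :
    cfc f A = algebraMap ℝ _ (f x - (f x - f y) / (x - y) * x) + ((f x - f y) / (x - y)) • A := by
  have hsa : IsSelfAdjoint A := hA
  have hs : ∀ z ∈ spectrum ℝ A, z = x ∨ z = y := by
    intro z hz
    have := spectrum.subset_polynomial_aeval A
      ((Polynomial.X - Polynomial.C x) * (Polynomial.X - Polynomial.C y)) ⟨z, hz, rfl⟩
    simp only [map_mul, map_sub, Polynomial.aeval_X, Polynomial.aeval_C] at this
    rw [h, spectrum.zero_eq] at this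
    simpa [sub_eq_zero] using this
  have hne : x - y ≠ 0 := sub_ne_zero.2 hxy
  rw [cfc_congr (g := fun z => (f x - (f x - f y) / (x - y) * x) + (f x - f y) / (x - y) * z)]
  · rw [cfc_const_add _ _ _ (by fun_prop) hsa, cfc_const_mul _ _ _ (by fun_prop)]
    rw [cfc_id' ℝ A hsa]
  · intro z hz
    rcases hs z hz with rfl | rfl
    · simp
    · simp only
      field_simp
      ring

lemma opm_aux (f : ℝ → ℝ) (hf : OpMonotone f)
    (α : ℝ) (hα : 1 ≤ α) (t : ℝ) (ht : 0 < t) (a : ℝ) (ha : t < a) :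
    f (α * t) ≤ α * f a := by
  obtain ⟨-, hpos, hmon⟩ := hf
  have hat : 0 < a - t := sub_pos.2 ha
  have hα0 : 0 < α := by linarith
  set s := Real.sqrt (α - 1) with hs
  have hs2 : s ^ 2 = α - 1 := Real.sq_sqrt (by linarith)
  obtain ⟨b, hba, hb⟩ : ∃ b, a ≠ b ∧ (t * s) ^ 2 ≤ (a - t) * (b - (α - 1) * t) := by
    refine ⟨1 + a + (α - 1) * t * a / (a - t), ?_, ?_⟩
    · have : 0 ≤ (α - 1) * t * a / (a - t) := by
        apply div_nonneg _ hat.le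
        have : 0 ≤ α - 1 := by linarith
        have : 0 < a := by linarith
        positivity
      linarith
    · have e : (a - t) * (1 + a + (α - 1) * t * a / (a - t) - (α - 1) * t)
          = (a - t) * (1 + a) + (α - 1) * t ^ 2 := by
        field_simp
        ring
      rw [e, mul_pow, hs2]
      have : 0 < (a - t) * (1 + a) := mul_pos hat (by linarith)
      linarith
  have hX := psd_two t ((α - 1) * t) (t * s) ht (by rw [mul_pow, hs2]; nlinarith)
  have hD := psd_two (a - t) (b - (α - 1) * t) (-(t * s)) hat (by rw [neg_sq]; exact hb)
  have hY : (!![(a : ℂ), 0; 0, (b : ℂ)]).IsHermitian := by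
    ext i j
    fin_cases i <;> fin_cases j <;> simp
  have key := hmon (Fin 2) _ (!![(a : ℂ), 0; 0, (b : ℂ)]) hX (by
    unfold LoewnerLE
    convert hD using 1
    ext i j
    fin_cases i <;> fin_cases j <;> simp)
  have hs2c : (s : ℂ) ^ 2 = α - 1 := by exact_mod_cast hs2
  have hne : α * t ≠ 0 := by positivity
  rw [cfc_two f _ hY a b hba (by
      ext i j
      fin_cases i <;> fin_cases j <;> simp [Matrix.mul_apply, Matrix.algebraMap_matrix_apply]),
    cfc_two f _ hX.1 (α * t) 0 hne (by
      ext i j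
      fin_cases i <;> fin_cases j <;>
        simp [Matrix.mul_apply, Matrix.algebraMap_matrix_apply] <;> ring_nf <;>
        (try rw [hs2c]) <;> ring)] at key
  have k0 := PosSemidef.diag_nonneg key (i := 0)
  simp only [Matrix.sub_apply, Matrix.add_apply, Matrix.smul_apply, Matrix.algebraMap_matrix_apply] at k0
  simp at k0
  norm_cast at k0
  have e : f (α * t) - (f (α * t) - f 0) / (α * t) * (α * t) + (f (α * t) - f 0) / (α * t) * t
      = f 0 + (f (α * t) - f 0) / α := by
    field_simp
    ring
  have h0 := hpos 0 le_rfl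
  have k1 : f 0 + (f (α * t) - f 0) / α ≤ f a := by
    rw [← e]; linarith
  have k2 : α * f 0 + (f (α * t) - f 0) ≤ α * f a := by
    have := mul_le_mul_of_nonneg_left k1 hα0.le
    rwa [mul_add, mul_div_cancel₀ _ hα0.ne'] at this
  nlinarith

theorem opMonotone_scalar_bound (f : ℝ → ℝ) (hf : OpMonotone f)
    (α : ℝ) (hα : 1 ≤ α) (t : ℝ) (ht : 0 ≤ t) :
    f (α * t) ≤ α * f t := by
  rcases ht.eq_or_lt with rfl | ht'
  · rw [mul_zero]
    nlinarith [hf.2.1 0 le_rfl]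
  · have hc : Filter.Tendsto (fun a => α * f a) (nhdsWithin t (Set.Ioi t)) (nhds (α * f t)) :=
      (((hf.1 t ht).mono_left (nhdsWithin_mono _ (fun x hx => ht.trans (le_of_lt hx))))).const_mul α
    refine ge_of_tendsto hc ?_
    filter_upwards [self_mem_nhdsWithin] with a ha
    exact opm_aux f hf α hα t ht' a ha
end

section
/- Let g : ℝ → ℝ be operator monotone decreasing on (0,∞). Then for every real α ≥ 1 and every real t > 0, one has g(α·t) ≥ (1/α)·g(t). -/
open Matrix ComplexOrder

lemma cfc_two_pt {n : Type} [Fintype n] [DecidableEq n] (g : ℝ → ℝ) (A : Matrix n n ℂ)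
    (hA : A.IsHermitian) (a b : ℝ) (hab : a ≠ b)
    (h : A * A = (a + b) • A - (a * b) • (1 : Matrix n n ℂ)) :
    cfc g A = (g a - (g a - g b) / (a - b) * a) • (1 : Matrix n n ℂ)
      + ((g a - g b) / (a - b)) • A := by
  have hA' : IsSelfAdjoint A := hA
  have hs : (spectrum ℝ A).EqOn g
      (fun x => (g a - (g a - g b) / (a - b) * a) + (g a - g b) / (a - b) * x) := by
    intro x hx
    have hx' : x = a ∨ x = b := by
      by_contra hcon
      push Not at hcon
      have h1 : x - a ≠ 0 := sub_ne_zero.2 hcon.1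
      have h2 : x - b ≠ 0 := sub_ne_zero.2 hcon.2
      apply hx
      have e : (algebraMap ℝ (Matrix n n ℂ) x - A) *
          (((x - a) * (x - b))⁻¹ • ((x - (a + b)) • (1 : Matrix n n ℂ) + A)) = 1 := by
        rw [Algebra.algebraMap_eq_smul_one, mul_smul_comm]
        have : (x • (1 : Matrix n n ℂ) - A) * ((x - (a + b)) • (1 : Matrix n n ℂ) + A)
            = ((x - a) * (x - b)) • (1 : Matrix n n ℂ) := by
          rw [mul_add, sub_mul, sub_mul, h]
          simp only [smul_mul_assoc, mul_smul_comm, one_mul, mul_one]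
          module
        rw [this, smul_smul, inv_mul_cancel₀ (mul_ne_zero h1 h2), one_smul]
      exact (Matrix.isUnit_iff_isUnit_det _).2 (Matrix.isUnit_det_of_right_inverse e)
    have h3 : a - b ≠ 0 := sub_ne_zero.2 hab
    rcases hx' with rfl | rfl
    · simp
    · simp only
      field_simp
      ring
  rw [cfc_congr hs, cfc_const_add _ _ A, cfc_const_mul_id _ A, Algebra.algebraMap_eq_smul_one]

lemma vmv_real (a b : ℝ) : vecMulVec ![(a : ℂ), (b : ℂ)] (star ![(a : ℂ), (b : ℂ)])
    = !![(a : ℂ) * a, (a : ℂ) * b; (b : ℂ) * a, (b : ℂ) * b] := by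
  ext i j
  rw [vecMulVec_apply]
  fin_cases i <;> fin_cases j <;> simp

lemma key (g : ℝ → ℝ) (hg : OpAntitone g) (α : ℝ) (hα : 1 ≤ α) (t : ℝ) (ht : 0 < t)
    (c : ℝ) (hc : 0 < c) (hca : α * c < 1) : c * g t ≤ g (α * t) := by
  obtain ⟨-, hpos, hmono⟩ := hg
  have hc1 : c < 1 := by nlinarith
  obtain ⟨p, hp⟩ : ∃ p : ℝ, p ^ 2 = c := ⟨√c, Real.sq_sqrt hc.le⟩
  obtain ⟨q, hq⟩ : ∃ q : ℝ, q ^ 2 = 1 - c := ⟨√(1 - c), Real.sq_sqrt (by linarith)⟩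
  obtain ⟨s, hs⟩ : ∃ s : ℝ, s = t * (1 - α * c) / 2 := ⟨_, rfl⟩
  have hs0 : 0 < s := by rw [hs]; have := mul_pos ht (sub_pos.2 hca); linarith
  have hst : s < t := by
    have : 0 < t * (α * c) := by positivity
    rw [hs]; nlinarith
  obtain ⟨m, hm⟩ : ∃ m : ℝ, m = α * t := ⟨_, rfl⟩
  have htm : t ≤ m := by rw [hm]; nlinarith
  obtain ⟨w, hw⟩ : ∃ w : ℝ, w = s * (1 + c) := ⟨_, rfl⟩
  have hw0 : 0 < w := by rw [hw]; positivity
  have hw2 : w = t - m * c - s * (1 - c) := by rw [hw, hm]; linear_combination 2 * hs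
  obtain ⟨B, hB⟩ : ∃ B : ℝ, B = (m - s) * (p * q) := ⟨_, rfl⟩
  obtain ⟨L, hL⟩ : ∃ L : ℝ, L = m * (1 - c) + s * c + B ^ 2 / w + t := ⟨_, rfl⟩
  have hLt : t < L := by
    have : 0 < m * (1 - c) := mul_pos (by linarith) (by linarith)
    have : 0 < s * c := by positivity
    have : 0 ≤ B ^ 2 / w := by positivity
    linarith
  rw [← hm]
  have hpq : p ^ 2 + q ^ 2 = 1 := by rw [hp, hq]; ring
  let X : Matrix (Fin 2) (Fin 2) ℂ :=
    !![((m * p ^ 2 + s * q ^ 2 : ℝ) : ℂ), (B : ℂ); (B : ℂ), ((m * q ^ 2 + s * p ^ 2 : ℝ) : ℂ)]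
  let Y : Matrix (Fin 2) (Fin 2) ℂ := !![(t : ℂ), 0; 0, (L : ℂ)]
  have hXe : X = s • (1 : Matrix (Fin 2) (Fin 2) ℂ)
      + (m - s) • vecMulVec ![(p : ℂ), (q : ℂ)] (star ![(p : ℂ), (q : ℂ)]) := by
    have hpq' : (p : ℂ) ^ 2 + (q : ℂ) ^ 2 = 1 := by exact_mod_cast hpq
    rw [vmv_real]
    ext i j
    fin_cases i <;> fin_cases j <;> simp [X, hB]
    · linear_combination (s : ℂ) * hpq'
    · exact Or.inl (mul_comm _ _)
    · linear_combination (s : ℂ) * hpq'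
  have hX : X.PosDef := by
    rw [hXe]
    exact (Matrix.PosDef.one.smul hs0).add_posSemidef
      ((posSemidef_vecMulVec_self_star _).smul (by linarith : (0 : ℝ) ≤ m - s))
  have hYe : Y = Matrix.diagonal ![(t : ℂ), (L : ℂ)] := by
    ext i j
    fin_cases i <;> fin_cases j <;> simp [Y]
  have hY : Y.PosDef := by
    rw [hYe]
    apply Matrix.PosDef.diagonal
    intro i
    fin_cases i
    · simpa using ht
    · simpa using ht.trans hLt
  have hXY : LoewnerLE X Y := by
    unfold LoewnerLE
    have : Y - X = w⁻¹ • vecMulVec ![(w : ℂ), ((-B : ℝ) : ℂ)] (star ![(w : ℂ), ((-B : ℝ) : ℂ)])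
        + Matrix.diagonal ![(0 : ℂ), (t : ℂ)] := by
      have hw' : (w : ℂ) ≠ 0 := by exact_mod_cast hw0.ne'
      rw [vmv_real]
      ext i j
      fin_cases i <;> fin_cases j <;> simp [X, Y]
      · rw [← mul_assoc, inv_mul_cancel₀ hw', one_mul]
        norm_cast
        rw [hp, hq, hw2]; ring
      · field_simp
      · field_simp
      · norm_cast
        rw [hp, hq, hL]; field_simp; ring
    rw [this]
    refine ((posSemidef_vecMulVec_self_star _).smul (by positivity : (0 : ℝ) ≤ w⁻¹)).add ?_
    apply Matrix.PosSemidef.diagonal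
    intro i
    fin_cases i
    · simp
    · simpa using ht.le
  have hms : m ≠ s := by linarith
  have H := hmono (Fin 2) X Y hX hY hXY
  unfold LoewnerLE at H
  rw [cfc_two_pt g X hX.1 m s hms ?_, cfc_two_pt g Y hY.1 t L hLt.ne ?_] at H
  · have H2 := H.dotProduct_mulVec_nonneg ![(p : ℂ), (q : ℂ)]
    have e1 : (g m - (g m - g s) / (m - s) * m) + (g m - g s) / (m - s) * m = g m := by ring
    have e2 : (g t - (g t - g L) / (t - L) * t) + (g t - g L) / (t - L) * t = g t := by ring
    have e3 : (g t - (g t - g L) / (t - L) * t) + (g t - g L) / (t - L) * L = g L := by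
      have : t - L ≠ 0 := sub_ne_zero.2 hLt.ne
      field_simp; ring
    generalize (g m - g s) / (m - s) = k1 at *
    generalize (g t - g L) / (t - L) = k2 at *
    generalize g m - k1 * m = k3 at *
    generalize g t - k2 * t = k4 at *
    have H3 : 0 ≤ p ^ 2 * (k3 + k1 * (m * p ^ 2 + s * q ^ 2)) + 2 * p * q * (k1 * B)
        + q ^ 2 * (k3 + k1 * (m * q ^ 2 + s * p ^ 2))
        - p ^ 2 * (k4 + k2 * t) - q ^ 2 * (k4 + k2 * L) := by
      have := (Complex.le_def.1 H2).1
      simp [X, Y, dotProduct, mulVec, Fin.sum_univ_two, ← Complex.ofReal_pow] at this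
      linarith
    rw [e2, e3, hB] at H3
    have h4 : p ^ 2 * (k3 + k1 * (m * p ^ 2 + s * q ^ 2)) + 2 * p * q * (k1 * ((m - s) * (p * q)))
        + q ^ 2 * (k3 + k1 * (m * q ^ 2 + s * p ^ 2)) = g m := by
      rw [← e1]
      linear_combination (k3 + k1 * m * (p ^ 2 + q ^ 2 + 1)) * hpq
    rw [h4, hp, hq] at H3
    have := mul_nonneg (by linarith : 0 ≤ 1 - c) (hpos L (by linarith))
    linarith
  · ext i j
    fin_cases i <;> fin_cases j <;> simp [Y, Matrix.mul_apply, Fin.sum_univ_two] <;> ring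
  · have hpq' : (p : ℂ) ^ 2 + (q : ℂ) ^ 2 = 1 := by exact_mod_cast hpq
    ext i j
    fin_cases i <;> fin_cases j <;> simp [X, hB, Matrix.mul_apply, Fin.sum_univ_two]
    · linear_combination ((m : ℂ) ^ 2 * p ^ 2 + s ^ 2 * q ^ 2 - m * s) * hpq'
    · linear_combination (((m : ℂ) ^ 2 - s ^ 2) * p * q) * hpq'
    · linear_combination (((m : ℂ) ^ 2 - s ^ 2) * p * q) * hpq'
    · linear_combination ((m : ℂ) ^ 2 * q ^ 2 + s ^ 2 * p ^ 2 - m * s) * hpq'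

theorem opAntitone_scalar_bound (g : ℝ → ℝ) (hg : OpAntitone g)
    (α : ℝ) (hα : 1 ≤ α) (t : ℝ) (ht : 0 < t) :
    (1 / α) * g t ≤ g (α * t) := by
  have ha : 0 < α := by linarith
  have h0 := hg.2.1 (α * t) (by positivity)
  have h1 := hg.2.1 t ht
  by_contra! hcon
  have hgt : 0 < g t := by
    rcases h1.eq_or_lt with h | h
    · rw [← h] at hcon; linarith
    · exact h
  obtain ⟨c, hc1, hc2⟩ := exists_between ((div_lt_iff₀ hgt).2 hcon)
  have hc : 0 < c := lt_of_le_of_lt (by positivity) hc1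
  have := key g hg α hα t ht c hc (by rw [lt_div_iff₀ ha] at hc2; linarith)
  rw [div_lt_iff₀ hgt] at hc1
  linarith
end

section
/- Let Φ be a positive linear map from n×n to m×m complex matrices, let f : ℝ → ℝ be operator monotone on [0,∞), and let A, B be positive definite n×n complex matrices with s·A ≤ B ≤ t·A for some scalars 0 < s ≤ t with s·t ≥ 1. Then (Φ(f(A)) + Φ(f(B)))/2 ≤ ((√s+√t)/2)²·Φ(f(A ! B)). -/
open Matrix ComplexOrder

section Aux
open scoped MatrixOrder

lemma aux_poly (f : ℝ → ℝ) (S : Set ℝ) (hS : S.Finite) :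
    ∃ p : Polynomial ℝ, ∀ x ∈ S, p.eval x = f x := by
  refine ⟨Lagrange.interpolate hS.toFinset id f, fun x hx => ?_⟩
  have := Lagrange.eval_interpolate_at_node (s := hS.toFinset) (v := id) (i := x) f
    (Function.injective_id.injOn) (by simpa using hx)
  simpa using this

lemma aux_cfc {k : Type} [Fintype k] [DecidableEq k] (f : ℝ → ℝ) (X : Matrix k k ℂ)
    (hX : X.IsHermitian) (p : Polynomial ℝ) (hp : ∀ x ∈ spectrum ℝ X, p.eval x = f x) :
    cfc f X = Polynomial.aeval X p := by
  rw [← cfc_polynomial p X hX.isSelfAdjoint]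
  exact cfc_congr (fun x hx => (hp x hx).symm)

lemma aux_aeval_blocks {k : Type} [Fintype k] [DecidableEq k] (A B : Matrix k k ℂ)
    (p : Polynomial ℝ) :
    Polynomial.aeval (fromBlocks A 0 0 B) p =
      fromBlocks (Polynomial.aeval A p) 0 0 (Polynomial.aeval B p) := by
  induction p using Polynomial.induction_on' with
  | add p q hp hq => simp [hp, hq, fromBlocks_add]
  | monomial n a =>
    have h : ∀ n : ℕ, (fromBlocks A 0 0 B) ^ n = fromBlocks (A ^ n) 0 0 (B ^ n) := by
      intro n
      induction n with
      | zero => simp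
      | succ n ih => simp [pow_succ, ih, fromBlocks_multiply]
    simp only [Polynomial.aeval_monomial, h, Algebra.algebraMap_eq_smul_one, smul_mul_assoc,
      one_mul, fromBlocks_smul, smul_zero]

lemma aux_aeval_conj {k : Type} [Fintype k] [DecidableEq k] (U V X : Matrix k k ℂ)
    (h : U * V = 1) (p : Polynomial ℝ) :
    Polynomial.aeval (V * X * U) p = V * Polynomial.aeval X p * U := by
  have h' : V * U = 1 := mul_eq_one_comm.mp h
  induction p using Polynomial.induction_on' with
  | add p q hp hq => simp [hp, hq, mul_add, add_mul]
  | monomial n a =>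
    have h : ∀ n : ℕ, (V * X * U) ^ n = V * X ^ n * U := by
      intro n
      induction n with
      | zero => simp [h']
      | succ n ih =>
        rw [pow_succ, ih, pow_succ]
        calc V * X ^ n * U * (V * X * U) = V * X ^ n * (U * V) * X * U := by
              simp only [mul_assoc]
          _ = _ := by rw [h]; simp only [mul_assoc, one_mul]
    simp only [Polynomial.aeval_monomial, h, Algebra.algebraMap_eq_smul_one, smul_mul_assoc,
      one_mul, mul_smul_comm]

lemma aux_jensen {k : Type} [Fintype k] [DecidableEq k] (f : ℝ → ℝ) (hf : OpMonotone f)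
    (A B Q : Matrix k k ℂ) (hA : A.PosSemidef) (hB : B.PosSemidef) (hQ : Q.PosSemidef)
    (a b : ℝ) (hab : a ^ 2 + b ^ 2 = 1)
    (hE : (Q - (a ^ 2 • A + b ^ 2 • B)).PosDef) :
    LoewnerLE (a ^ 2 • cfc f A + b ^ 2 • cfc f B) (cfc f Q) := by
  set U : Matrix (k ⊕ k) (k ⊕ k) ℂ :=
    fromBlocks (a • 1) (-(b • 1)) (b • 1) (a • 1) with hU
  have hUH : Uᴴ = fromBlocks (a • 1) (b • 1) (-(b • 1)) (a • 1) := by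
    simp [hU, fromBlocks_conjTranspose, conjTranspose_smul]
  have hconj : ∀ C D : Matrix k k ℂ, Uᴴ * fromBlocks C 0 0 D * U =
      fromBlocks (a ^ 2 • C + b ^ 2 • D) ((a * b) • (D - C)) ((a * b) • (D - C))
        (b ^ 2 • C + a ^ 2 • D) := by
    intro C D
    rw [hUH, hU]
    simp only [fromBlocks_multiply]
    congr 1 <;> simp [smul_smul] <;> module
  have hUU : Uᴴ * U = 1 := by
    have := hconj 1 1
    rw [fromBlocks_one, mul_one] at this
    rw [this, ← fromBlocks_one]
    congr 1
    · rw [← add_smul, hab, one_smul]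
    · simp
    · simp
    · rw [← add_smul, add_comm, hab, one_smul]
  have hUU' : U * Uᴴ = 1 := mul_eq_one_comm.mp hUU
  set E := Q - (a ^ 2 • A + b ^ 2 • B) with hEdef
  set D := -((a * b) • (B - A)) with hD
  have hDH : Dᴴ = D := by
    simp [hD, conjTranspose_smul, hA.isHermitian.eq, hB.isHermitian.eq]
  set R := b ^ 2 • A + a ^ 2 • B + Dᴴ * E⁻¹ * D with hR
  have hRp : R.PosSemidef := by
    refine PosSemidef.add (PosSemidef.add (hA.smul (sq_nonneg b)) (hB.smul (sq_nonneg a))) ?_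
    exact hE.inv.posSemidef.conjTranspose_mul_mul_same D
  set X := fromBlocks A 0 0 B with hX
  have hXp : X.PosSemidef := by
    have hXX : ∀ (C C' : Matrix k k ℂ), C.PosSemidef → C'.PosSemidef →
        (fromBlocks C 0 0 C').PosSemidef := by
      intro C C' h h'
      obtain ⟨c, rfl⟩ := CStarAlgebra.nonneg_iff_eq_star_mul_self.mp h.nonneg
      obtain ⟨c', rfl⟩ := CStarAlgebra.nonneg_iff_eq_star_mul_self.mp h'.nonneg
      have := posSemidef_conjTranspose_mul_self (fromBlocks c 0 0 c')
      simpa [fromBlocks_conjTranspose, fromBlocks_multiply, star_eq_conjTranspose] using this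
    exact hXX A B hA hB
  have hUX : (Uᴴ * X * U).PosSemidef := hXp.conjTranspose_mul_mul_same U
  set Y := fromBlocks Q 0 0 R with hY
  have hle : LoewnerLE (Uᴴ * X * U) Y := by
    unfold LoewnerLE
    have h0 : Y - Uᴴ * X * U = fromBlocks E D Dᴴ (Dᴴ * E⁻¹ * D) := by
      rw [hX, hconj, hY, hDH, sub_eq_add_neg, fromBlocks_neg, fromBlocks_add]
      congr 1
      · simp [hD]
      · simp [hD]
      · rw [hR, hDH]; abel
    haveI : Invertible E := hE.isUnit.invertible
    rw [h0, PosDef.fromBlocks₁₁ _ _ hE, sub_self]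
    exact PosSemidef.zero
  have hYp : Y.PosSemidef := by
    have := hle.add hUX
    simpa using this
  have key := hf.2.2 (k ⊕ k) _ _ hUX hle
  obtain ⟨p, hp⟩ := aux_poly f (spectrum ℝ A ∪ spectrum ℝ B ∪ spectrum ℝ Q ∪ spectrum ℝ R ∪
    spectrum ℝ Y ∪ spectrum ℝ (Uᴴ * X * U))
    ((((((finite_real_spectrum).union (finite_real_spectrum)).union (finite_real_spectrum)).union
      (finite_real_spectrum)).union (finite_real_spectrum)).union (finite_real_spectrum))
  have eA := aux_cfc f A hA.isHermitian p (fun x hx => hp x (by simp [hx]))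
  have eB := aux_cfc f B hB.isHermitian p (fun x hx => hp x (by simp [hx]))
  have eQ := aux_cfc f Q hQ.isHermitian p (fun x hx => hp x (by simp [hx]))
  have eY := aux_cfc f Y hYp.isHermitian p (fun x hx => hp x (Or.inl (Or.inr hx)))
  have eU := aux_cfc f _ hUX.isHermitian p (fun x hx => hp x (Or.inr hx))
  rw [eY, eU, aux_aeval_conj _ _ _ hUU', hX, hY, aux_aeval_blocks, aux_aeval_blocks, hconj] at key
  rw [eA, eB, eQ]
  unfold LoewnerLE at key ⊢
  have := key.submatrix Sum.inl
  convert this using 1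
  ext i j
  simp

lemma aux_scalar (f : ℝ → ℝ) (hf : OpMonotone f) (c x : ℝ) (hc : 1 ≤ c) (hx : 0 ≤ x) :
    f (c * x) ≤ c * f x := by
  have hc0 : 0 < c := by linarith
  have h1 : ∀ ε : ℝ, 0 < ε → c⁻¹ * f (c * x) ≤ f (x + ε) := by
    intro ε hε
    have hps : ∀ r : ℝ, 0 ≤ r → (algebraMap ℝ (Matrix Unit Unit ℂ) r).PosSemidef := by
      intro r hr
      rw [Algebra.algebraMap_eq_smul_one]
      exact PosSemidef.one.smul hr
    have hci : c⁻¹ ≤ 1 := inv_le_one_of_one_le₀ hc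
    have e1 : Real.sqrt c⁻¹ ^ 2 = c⁻¹ := Real.sq_sqrt (by positivity)
    have e2 : Real.sqrt (1 - c⁻¹) ^ 2 = 1 - c⁻¹ := Real.sq_sqrt (by linarith)
    have := aux_jensen f hf (algebraMap ℝ (Matrix Unit Unit ℂ) (c * x))
      (algebraMap ℝ (Matrix Unit Unit ℂ) 0) (algebraMap ℝ (Matrix Unit Unit ℂ) (x + ε))
      (hps _ (by positivity)) (hps _ le_rfl) (hps _ (by positivity))
      (Real.sqrt c⁻¹) (Real.sqrt (1 - c⁻¹)) (by rw [e1, e2]; ring)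
      (by
        rw [e1, e2]
        have : algebraMap ℝ (Matrix Unit Unit ℂ) (x + ε) - (c⁻¹ • algebraMap ℝ (Matrix Unit Unit ℂ) (c * x) + (1 - c⁻¹) • algebraMap ℝ (Matrix Unit Unit ℂ) 0) = ε • 1 := by
          simp only [Algebra.algebraMap_eq_smul_one, smul_smul, ← add_smul, ← sub_smul]
          congr 1
          field_simp
          ring
        rw [this]
        exact PosDef.one.smul hε)
    rw [e1, e2, cfc_algebraMap, cfc_algebraMap, cfc_algebraMap] at this
    unfold LoewnerLE at this
    have h := this.diag_nonneg (i := ())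
    simp only [Algebra.algebraMap_eq_smul_one, smul_smul, ← add_smul, ← sub_smul] at h
    simp at h
    have h' : c⁻¹ * f (c * x) + (1 - c⁻¹) * f 0 ≤ f (x + ε) := by
      exact_mod_cast h
    have := mul_nonneg (sub_nonneg.2 hci) (hf.2.1 0 le_rfl)
    linarith
  have h2 : c⁻¹ * f (c * x) ≤ f x := by
    have hcont : Filter.Tendsto (fun ε : ℝ => f (x + ε)) (nhdsWithin 0 (Set.Ioi 0)) (nhds (f x)) := by
      have h := hf.1 x hx
      refine h.tendsto.comp (tendsto_nhdsWithin_iff.2 ⟨?_, ?_⟩)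
      · have : ContinuousAt (fun ε : ℝ => x + ε) 0 := by fun_prop
        have h3 := this.tendsto
        rw [add_zero] at h3
        exact h3.mono_left nhdsWithin_le_nhds
      · filter_upwards [self_mem_nhdsWithin] with ε hε
        have : (0:ℝ) < ε := hε
        exact Set.mem_Ici.2 (by positivity)
    refine ge_of_tendsto hcont ?_
    filter_upwards [self_mem_nhdsWithin] with ε hε
    exact h1 ε hε
  rwa [inv_mul_le_iff₀ hc0] at h2

lemma aux_scale {k : Type} [Fintype k] [DecidableEq k] (f : ℝ → ℝ) (hf : OpMonotone f)
    (H : Matrix k k ℂ) (hH : H.PosSemidef) (c : ℝ) (hc : 1 ≤ c) :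
    LoewnerLE (cfc f (c • H)) (c • cfc f H) := by
  have hsa : IsSelfAdjoint H := hH.isHermitian.isSelfAdjoint
  have hfin : (spectrum ℝ H).Finite := finite_real_spectrum
  have hcont : ∀ g : ℝ → ℝ, ContinuousOn g (spectrum ℝ H) := fun g => hfin.continuousOn g
  rw [← cfc_comp_const_mul c f H ((hfin.image _).continuousOn f) hsa,
    ← cfc_const_mul c f H (hcont f)]
  have : cfc (fun x => f (c * x)) H ≤ cfc (fun x => c * f x) H := by
    refine cfc_mono (fun x hx => ?_) (hcont _) (hcont _)
    exact aux_scalar f hf c x hc (spectrum_nonneg_of_nonneg hH.nonneg hx)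
  exact this

lemma aux_diag {k : Type} [Fintype k] [DecidableEq k] (A B : Matrix k k ℂ) (hA : A.PosDef)
    (hB : B.PosDef) : ∃ (G : Matrix k k ℂ) (d : k → ℝ), IsUnit G ∧ A = Gᴴ * G ∧
      B = Gᴴ * diagonal (fun i => (d i : ℂ)) * G := by
  obtain ⟨P, hP, rfl⟩ := CStarAlgebra.isStrictlyPositive_iff_eq_star_mul_self.mp
    hA.isStrictlyPositive
  have hPd := (isUnit_iff_isUnit_det P).1 hP
  have hX : ((P⁻¹)ᴴ * B * P⁻¹).IsHermitian := (hB.posSemidef.conjTranspose_mul_mul_same P⁻¹).1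
  have hs := hX.spectral_theorem
  rw [Unitary.conjStarAlgAut_apply] at hs
  set V : Matrix k k ℂ := (hX.eigenvectorUnitary : Matrix k k ℂ) with hV
  have hV1 : Vᴴ * V = 1 := Unitary.coe_star_mul_self hX.eigenvectorUnitary
  have hV2 : V * Vᴴ = 1 := mul_eq_one_comm.mp hV1
  refine ⟨Vᴴ * P, hX.eigenvalues, ?_, ?_, ?_⟩
  · exact (IsUnit.of_mul_eq_one V hV1).mul hP
  · rw [conjTranspose_mul, conjTranspose_conjTranspose, star_eq_conjTranspose]
    calc Pᴴ * P = Pᴴ * 1 * P := by simp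
      _ = _ := by rw [← hV2]; simp only [mul_assoc]
  · have h1 : P⁻¹ * P = 1 := nonsing_inv_mul P hPd
    have h2 : Pᴴ * (P⁻¹)ᴴ = 1 := by rw [← conjTranspose_mul, h1, conjTranspose_one]
    calc B = (Pᴴ * (P⁻¹)ᴴ) * B * (P⁻¹ * P) := by simp [h1, h2]
      _ = Pᴴ * ((P⁻¹)ᴴ * B * P⁻¹) * P := by simp only [mul_assoc]
      _ = Pᴴ * (V * diagonal (RCLike.ofReal ∘ hX.eigenvalues) * star V) * P :=
        congrArg (fun Z => Pᴴ * Z * P) hs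
      _ = _ := by
        have hdd : (RCLike.ofReal ∘ hX.eigenvalues : k → ℂ) =
          fun i => (hX.eigenvalues i : ℂ) := rfl
        rw [conjTranspose_mul, conjTranspose_conjTranspose, star_eq_conjTranspose, hdd]
        simp only [mul_assoc]

lemma aux_real (s t d : ℝ) (hs : 0 < s) (h1 : 1 ≤ s * t) (hsd : s ≤ d) (hdt : d ≤ t) :
    0 ≤ ((Real.sqrt s + Real.sqrt t) / 2) ^ 2 * (2 * d / (1 + d)) - (1 + d) / 2 := by
  have hd : 0 < d := by linarith
  have ht : 0 < t := by linarith
  have e1 : Real.sqrt s ^ 2 = s := Real.sq_sqrt hs.le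
  have e2 : Real.sqrt t ^ 2 = t := Real.sq_sqrt ht.le
  have e3 : 1 ≤ Real.sqrt s * Real.sqrt t := by
    rw [← Real.sqrt_mul hs.le]; exact Real.one_le_sqrt.2 h1
  have hK : ((Real.sqrt s + Real.sqrt t) / 2) ^ 2 = (s + t + 2 * (Real.sqrt s * Real.sqrt t)) / 4 := by
    rw [← e1, ← e2, Real.sqrt_sq (Real.sqrt_nonneg _), Real.sqrt_sq (Real.sqrt_nonneg _)]; ring
  have hK2 : (s + t + 2) / 4 ≤ ((Real.sqrt s + Real.sqrt t) / 2) ^ 2 := by rw [hK]; linarith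
  have h3 : (1 + d) / 2 ≤ (s + t + 2) / 4 * (2 * d / (1 + d)) := by
    rw [← mul_div_assoc, div_le_div_iff₀ (by norm_num) (by linarith)]
    nlinarith [mul_nonneg (sub_nonneg.2 hsd) (sub_nonneg.2 hdt)]
  have : 0 ≤ 2 * d / (1 + d) := by positivity
  nlinarith [mul_le_mul_of_nonneg_right hK2 this]

lemma aux_hmean {k : Type} [Fintype k] [DecidableEq k] (A B : Matrix k k ℂ) (hA : A.PosDef)
    (hB : B.PosDef) (s t : ℝ) (hs : 0 < s) (h1 : 1 ≤ s * t)
    (hsA : LoewnerLE (s • A) B) (htA : LoewnerLE B (t • A)) :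
    (((Real.sqrt s + Real.sqrt t) / 2) ^ 2 • hmean A B - (2 : ℝ)⁻¹ • (A + B)).PosSemidef := by
  obtain ⟨G, d, hG, rfl, rfl⟩ := aux_diag A B hA hB
  have hGd := (isUnit_iff_isUnit_det G).1 hG
  have g1 : G⁻¹ * G = 1 := nonsing_inv_mul G hGd
  have g2 : G * G⁻¹ = 1 := mul_nonsing_inv G hGd
  have g3 : Gᴴ * (G⁻¹)ᴴ = 1 := by rw [← conjTranspose_mul, g1, conjTranspose_one]
  have g4 : (G⁻¹)ᴴ * Gᴴ = 1 := by rw [← conjTranspose_mul, g2, conjTranspose_one]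
  have hAd : Gᴴ * G = Gᴴ * diagonal (fun i => ((1 : ℝ) : ℂ)) * G := by simp
  have hsm : ∀ (r : ℝ) (e : k → ℝ), r • (Gᴴ * diagonal (fun i => (e i : ℂ)) * G) =
      Gᴴ * diagonal (fun i => ((r * e i : ℝ) : ℂ)) * G := by
    intro r e
    have : diagonal (fun i => ((r * e i : ℝ) : ℂ)) = r • diagonal (fun i => (e i : ℂ)) := by
      ext i j; by_cases h : i = j <;> simp [diagonal, h]
    rw [this]; simp
  have hadd : ∀ (e e' : k → ℝ), (Gᴴ * diagonal (fun i => (e i : ℂ)) * G) +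
      (Gᴴ * diagonal (fun i => (e' i : ℂ)) * G) =
      Gᴴ * diagonal (fun i => ((e i + e' i : ℝ) : ℂ)) * G := by
    intro e e'
    rw [← add_mul, ← mul_add, diagonal_add]; simp
  have hsub : ∀ (e e' : k → ℝ), (Gᴴ * diagonal (fun i => (e i : ℂ)) * G) -
      (Gᴴ * diagonal (fun i => (e' i : ℂ)) * G) =
      Gᴴ * diagonal (fun i => ((e i - e' i : ℝ) : ℂ)) * G := by
    intro e e'
    rw [← sub_mul, ← mul_sub, diagonal_sub]; simp
  have hpsd : ∀ (e : k → ℝ), (Gᴴ * diagonal (fun i => (e i : ℂ)) * G).PosSemidef ↔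
      ∀ i, 0 ≤ e i := by
    intro e
    have := IsUnit.posSemidef_star_left_conjugate_iff (x := diagonal (fun i => (e i : ℂ))) hG
    rw [star_eq_conjTranspose] at this
    rw [this, posSemidef_diagonal_iff]
    simp
  have hsd : ∀ i, s ≤ d i := by
    unfold LoewnerLE at hsA
    rw [hAd, hsm, hsub, hpsd] at hsA
    intro i; have := hsA i; linarith
  have hdt : ∀ i, d i ≤ t := by
    unfold LoewnerLE at htA
    rw [hAd, hsm, hsub, hpsd] at htA
    intro i; have := htA i; linarith
  have hd0 : ∀ i, 0 < d i := fun i => lt_of_lt_of_le hs (hsd i)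
  have hH : hmean (Gᴴ * G) (Gᴴ * diagonal (fun i => (d i : ℂ)) * G) =
      Gᴴ * diagonal (fun i => ((2 * d i / (1 + d i) : ℝ) : ℂ)) * G := by
    unfold hmean
    have i1 : (Gᴴ * G)⁻¹ = G⁻¹ * (G⁻¹)ᴴ := by
      apply inv_eq_left_inv
      calc G⁻¹ * (G⁻¹)ᴴ * (Gᴴ * G) = G⁻¹ * ((G⁻¹)ᴴ * Gᴴ) * G := by simp only [mul_assoc]
        _ = 1 := by rw [g4, mul_one, g1]
    have i2 : (Gᴴ * diagonal (fun i => (d i : ℂ)) * G)⁻¹ =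
        G⁻¹ * diagonal (fun i => (((d i)⁻¹ : ℝ) : ℂ)) * (G⁻¹)ᴴ := by
      apply inv_eq_left_inv
      calc _ = G⁻¹ * diagonal (fun i => (((d i)⁻¹ : ℝ) : ℂ)) * ((G⁻¹)ᴴ * Gᴴ) *
              diagonal (fun i => (d i : ℂ)) * G := by simp only [mul_assoc]
        _ = G⁻¹ * (diagonal (fun i => (((d i)⁻¹ : ℝ) : ℂ)) * diagonal (fun i => (d i : ℂ))) * G := by
              rw [g4]; simp only [mul_assoc, one_mul]
        _ = 1 := by
              rw [diagonal_mul_diagonal]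
              have : (fun i => (((d i)⁻¹ : ℝ) : ℂ) * (d i : ℂ)) = fun _ => 1 := by
                funext i
                rw [← Complex.ofReal_mul, inv_mul_cancel₀ (hd0 i).ne']; simp
              rw [this, diagonal_one, mul_one, g1]
    have i3 : (2 : ℝ)⁻¹ • (G⁻¹ * (G⁻¹)ᴴ +
        G⁻¹ * diagonal (fun i => (((d i)⁻¹ : ℝ) : ℂ)) * (G⁻¹)ᴴ) =
        G⁻¹ * diagonal (fun i => (((1 + d i) / (2 * d i) : ℝ) : ℂ)) * (G⁻¹)ᴴ := by
      have : diagonal (fun i => (((1 + d i) / (2 * d i) : ℝ) : ℂ)) =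
          (2 : ℝ)⁻¹ • (1 + diagonal (fun i => (((d i)⁻¹ : ℝ) : ℂ))) := by
        rw [← diagonal_one, diagonal_add]
        ext i j
        by_cases h : i = j
        · subst h
          have h0 : (d i : ℂ) ≠ 0 := by exact_mod_cast (hd0 i).ne'
          simp
          field_simp
          ring
        · simp [h]
      rw [this]
      simp [mul_add, add_mul]
    rw [i1, i2, i3]
    apply inv_eq_left_inv
    calc _ = Gᴴ * diagonal (fun i => ((2 * d i / (1 + d i) : ℝ) : ℂ)) * (G * G⁻¹) *
              diagonal (fun i => (((1 + d i) / (2 * d i) : ℝ) : ℂ)) * (G⁻¹)ᴴ := by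
              simp only [mul_assoc]
        _ = Gᴴ * (diagonal (fun i => ((2 * d i / (1 + d i) : ℝ) : ℂ)) *
              diagonal (fun i => (((1 + d i) / (2 * d i) : ℝ) : ℂ))) * (G⁻¹)ᴴ := by
              rw [g2]; simp only [mul_assoc, one_mul]
        _ = 1 := by
              rw [diagonal_mul_diagonal]
              have : (fun i => ((2 * d i / (1 + d i) : ℝ) : ℂ) *
                  (((1 + d i) / (2 * d i) : ℝ) : ℂ)) = fun _ => 1 := by
                funext i
                have := hd0 i
                have h2 : 2 * d i / (1 + d i) * ((1 + d i) / (2 * d i)) = 1 := by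
                  field_simp
                rw [← Complex.ofReal_mul, h2]; simp
              rw [this, diagonal_one, mul_one, g3]
  rw [hH, hAd, hadd, hsm, hsm, hsub, hpsd]
  intro i
  have := aux_real s t (d i) hs h1 (hsd i) (hdt i)
  have e : (2:ℝ)⁻¹ * (1 + d i) = (1 + d i) / 2 := by ring
  rw [e]; exact this

lemma aux_closed {k : Type} [Fintype k] (S T : Matrix k k ℂ) (hT : S.IsHermitian)
    (hT' : T.IsHermitian)
    (h : ∀ δ : ℝ, 0 < δ → ((1 + δ) • S - T).PosSemidef) : (S - T).PosSemidef := by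
  refine PosSemidef.of_dotProduct_mulVec_nonneg (hT.sub hT') (fun x => ?_)
  have h1 : ∀ δ : ℝ, 0 < δ → 0 ≤ star x ⬝ᵥ (S - T) *ᵥ x + δ * (star x ⬝ᵥ S *ᵥ x) := by
    intro δ hδ
    have := (h δ hδ).dotProduct_mulVec_nonneg x
    have e : (1 + δ) • S - T = (S - T) + δ • S := by module
    rw [e, add_mulVec, dotProduct_add, smul_mulVec, dotProduct_smul] at this
    simpa using this
  have hc : Filter.Tendsto (fun δ : ℝ => star x ⬝ᵥ (S - T) *ᵥ x + δ * (star x ⬝ᵥ S *ᵥ x))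
      (nhdsWithin 0 (Set.Ioi 0)) (nhds (star x ⬝ᵥ (S - T) *ᵥ x)) := by
    have : ContinuousAt (fun δ : ℝ => star x ⬝ᵥ (S - T) *ᵥ x + δ * (star x ⬝ᵥ S *ᵥ x)) 0 := by
      fun_prop
    have h3 := this.tendsto
    simp only [Complex.ofReal_zero, zero_mul, add_zero] at h3
    exact h3.mono_left nhdsWithin_le_nhds
  refine ge_of_tendsto hc ?_
  filter_upwards [self_mem_nhdsWithin] with δ hδ
  exact h1 δ hδ

end Aux

theorem polya_szego_monotone_st_ge_one {n m : Type} [Fintype n] [DecidableEq n] [Fintype m] [DecidableEq m]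
    (Φ : Matrix n n ℂ →ₗ[ℂ] Matrix m m ℂ)
    (hΦ : ∀ X : Matrix n n ℂ, X.PosSemidef → (Φ X).PosSemidef)
    (f : ℝ → ℝ) (hf : OpMonotone f)
    (A B : Matrix n n ℂ) (hA : A.PosDef) (hB : B.PosDef)
    (s t : ℝ) (hs : 0 < s) (hst : s ≤ t) (h1 : 1 ≤ s * t)
    (hsA : LoewnerLE (s • A) B) (htA : LoewnerLE B (t • A)) :
    LoewnerLE ((2 : ℝ)⁻¹ • (Φ (cfc f A) + Φ (cfc f B)))
      ((((Real.sqrt s + Real.sqrt t) / 2) ^ 2) • Φ (cfc f (hmean A B))) := by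
  set K := ((Real.sqrt s + Real.sqrt t) / 2) ^ 2 with hK
  have hH : (hmean A B).PosDef := by
    unfold hmean
    exact ((hA.inv.add hB.inv).smul (by norm_num : (0:ℝ) < 2⁻¹)).inv
  have hK1 : 1 ≤ K := by
    have e3 : 1 ≤ Real.sqrt s * Real.sqrt t := by
      rw [← Real.sqrt_mul hs.le]; exact Real.one_le_sqrt.2 h1
    rw [hK]
    nlinarith [sq_nonneg (Real.sqrt s - Real.sqrt t)]
  have hmain := aux_hmean A B hA hB s t hs h1 hsA htA
  rw [← hK] at hmain
  have hherm : ∀ X : Matrix n n ℂ, (cfc f X).IsHermitian := fun X => cfc_predicate f X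
  have key : (K • cfc f (hmean A B) - (2 : ℝ)⁻¹ • (cfc f A + cfc f B)).PosSemidef := by
    refine aux_closed _ _ ((hherm _).smul (IsSelfAdjoint.all K))
      (((hherm _).add (hherm _)).smul (IsSelfAdjoint.all _)) (fun δ hδ => ?_)
    have e1 : Real.sqrt (2⁻¹) ^ 2 = 2⁻¹ := Real.sq_sqrt (by norm_num)
    have hc : 1 ≤ (1 + δ) * K := by nlinarith
    have hJ := aux_jensen f hf A B (((1 + δ) * K) • hmean A B) hA.posSemidef hB.posSemidef
      (hH.posSemidef.smul (by linarith : (0:ℝ) ≤ (1 + δ) * K)) (Real.sqrt 2⁻¹) (Real.sqrt 2⁻¹)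
      (by rw [e1]; norm_num) (by
        rw [e1]
        have e : ((1 + δ) * K) • hmean A B - ((2:ℝ)⁻¹ • A + (2:ℝ)⁻¹ • B) =
          (K • hmean A B - (2 : ℝ)⁻¹ • (A + B)) + (δ * K) • hmean A B := by module
        rw [e]
        exact PosDef.posSemidef_add hmain (hH.smul (by positivity : (0:ℝ) < δ * K)))
    have hS := aux_scale f hf (hmean A B) hH.posSemidef _ hc
    rw [e1] at hJ
    unfold LoewnerLE at hJ hS
    have := hJ.add hS
    convert this using 1
    module
  have := hΦ _ key
  unfold LoewnerLE
  simpa only [map_sub, LinearMap.map_smul_of_tower, map_add] using this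
end

section
/- Let Φ be a positive linear map from n×n to m×m complex matrices that moreover maps positive definite matrices to positive definite matrices, let f : ℝ → ℝ be operator monotone on [0,∞) with f(x) > 0 for x > 0, and let A, B be positive definite n×n complex matrices with s·A ≤ B ≤ t·A for some scalars 0 < s ≤ t with s·t ≥ 1. Then Φ(f(A)) ♯ Φ(f(B)) ≤ ((√s+√t)/2)²·Φ(f(A ♯ B)). -/
open Matrix ComplexOrder

lemma aux_spec {k : Type} [Fintype k] [DecidableEq k] (X : Matrix k k ℂ) (hX : X.PosSemidef) :
    ∀ x ∈ spectrum ℝ X, 0 ≤ x := by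
  open scoped MatrixOrder in
  exact fun x hx => spectrum_nonneg_of_nonneg (Matrix.nonneg_iff_posSemidef.mpr hX) hx

lemma aux_poly_s6 (f : ℝ → ℝ) (S : Set ℝ) (hS : S.Finite) : ∃ p : Polynomial ℝ,
    ∀ (k : Type) [Fintype k] [DecidableEq k] (X : Matrix k k ℂ), X.IsHermitian →
      spectrum ℝ X ⊆ S → cfc f X = Polynomial.aeval X p := by
  classical
  refine ⟨Lagrange.interpolate hS.toFinset id f, ?_⟩
  intro k _ _ X hX hs
  rw [← cfc_polynomial _ X hX.isSelfAdjoint]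
  apply cfc_congr
  intro x hx
  exact (Lagrange.eval_interpolate_at_node (v := id) f (Set.injOn_id _)
    (by simpa using hs hx)).symm

lemma aux_intertwine {k : Type} [Fintype k] [DecidableEq k] (f : ℝ → ℝ) (X Y V : Matrix k k ℂ)
    (hX : X.IsHermitian) (hY : Y.IsHermitian) (h : X * V = V * Y) :
    cfc f X * V = V * cfc f Y := by
  obtain ⟨p, hp⟩ := aux_poly_s6 f (spectrum ℝ X ∪ spectrum ℝ Y)
    (X.finite_real_spectrum.union Y.finite_real_spectrum)
  rw [hp k X hX Set.subset_union_left, hp k Y hY Set.subset_union_right]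
  clear hp
  induction p using Polynomial.induction_on with
  | C a => simp [Algebra.algebraMap_eq_smul_one]
  | add p q h1 h2 => simp [add_mul, mul_add, h1, h2]
  | monomial n a ih =>
    rw [pow_succ, ← mul_assoc]
    simp only [map_mul, Polynomial.aeval_X] at ih ⊢
    rw [mul_assoc, h, ← mul_assoc, ih, mul_assoc]

lemma aux_block {k : Type} [Fintype k] [DecidableEq k] (f : ℝ → ℝ) (A B : Matrix k k ℂ)
    (hA : A.IsHermitian) (hB : B.IsHermitian) :
    cfc f (fromBlocks A 0 0 B) = fromBlocks (cfc f A) 0 0 (cfc f B) := by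
  have hX : (fromBlocks A 0 0 B).IsHermitian := by
    apply Matrix.IsHermitian.fromBlocks hA (by simp) hB
  obtain ⟨p, hp⟩ := aux_poly_s6 f (spectrum ℝ A ∪ spectrum ℝ B ∪ spectrum ℝ (fromBlocks A 0 0 B))
    ((A.finite_real_spectrum.union B.finite_real_spectrum).union finite_real_spectrum)
  rw [hp _ _ hX Set.subset_union_right, hp _ A hA (by intro x hx; simp [hx]),
    hp _ B hB (by intro x hx; simp [hx])]
  clear hp
  induction p using Polynomial.induction_on with
  | C a => simp [Algebra.algebraMap_eq_smul_one, ← fromBlocks_one, fromBlocks_smul]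
  | add p q h1 h2 => simp [h1, h2, fromBlocks_add]
  | monomial n a ih =>
    rw [pow_succ, ← mul_assoc]
    simp only [map_mul, Polynomial.aeval_X] at ih ⊢
    rw [ih, fromBlocks_multiply]
    simp

lemma aux_eps (f : ℝ → ℝ) (hf : OpMonotone f) {k : Type} [Fintype k] [DecidableEq k]
    (A B : Matrix k k ℂ) (hA : A.PosSemidef) (hB : B.PosSemidef) (c s e : ℝ)
    (hcs : c ^ 2 + s ^ 2 = 1) (he : 0 < e) :
    (cfc f ((c ^ 2 • A + s ^ 2 • B) + e ^ 2 • 1) - (c ^ 2 • cfc f A + s ^ 2 • cfc f B)).PosSemidef := by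
  set X := fromBlocks A 0 0 B with hXd
  set U : Matrix (k ⊕ k) (k ⊕ k) ℂ := fromBlocks (c • 1) (-s • 1) (s • 1) (c • 1) with hU
  have hUU : U * Uᴴ = 1 := by
    rw [hU, fromBlocks_conjTranspose, fromBlocks_multiply, ← fromBlocks_one]
    simp only [conjTranspose_smul, conjTranspose_one, smul_mul_assoc, mul_smul_comm, mul_one,
      smul_smul, ← add_smul, star_trivial]
    congr 1
    · rw [show c * c + -s * -s = 1 by nlinarith, one_smul]
    · rw [show s * c + c * -s = 0 by ring, zero_smul]
    · rw [show c * s + -s * c = 0 by ring, zero_smul]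
    · rw [show s * s + c * c = 1 by nlinarith, one_smul]
  have hUU' : Uᴴ * U = 1 := mul_eq_one_comm.mp hUU
  have hX : X.PosSemidef := by
    rw [hXd, posSemidef_iff_dotProduct_mulVec]
    refine ⟨Matrix.IsHermitian.fromBlocks hA.1 (by simp) hB.1, fun x => ?_⟩
    rw [fromBlocks_mulVec, dotProduct, Fintype.sum_sum_type]
    have h1 := hA.dotProduct_mulVec_nonneg (x ∘ Sum.inl)
    have h2 := hB.dotProduct_mulVec_nonneg (x ∘ Sum.inr)
    simpa [dotProduct] using add_nonneg h1 h2
  set X' := Uᴴ * X * U with hX'd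
  have hX' : X'.PosSemidef := hX.conjTranspose_mul_mul_same U
  have hint : cfc f X' = Uᴴ * cfc f X * U := by
    have := aux_intertwine f X X' U hX.1 hX'.1 (by
      rw [hX'd, ← mul_assoc, ← mul_assoc, hUU, one_mul])
    rw [mul_assoc, this, ← mul_assoc, hUU', one_mul]
  set P := c ^ 2 • A + s ^ 2 • B with hP
  set Q := s ^ 2 • A + c ^ 2 • B with hQ
  set D := (c * s) • (B - A) with hD
  have hDh : Dᴴ = D := by
    rw [hD, conjTranspose_smul, conjTranspose_sub, hA.1.eq, hB.1.eq]; simp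
  have hX'e : X' = fromBlocks P D D Q := by
    rw [hX'd, hU, hXd, fromBlocks_conjTranspose, fromBlocks_multiply, fromBlocks_multiply]
    simp only [conjTranspose_smul, conjTranspose_one, smul_mul_assoc, mul_smul_comm, mul_one,
      smul_smul, star_trivial, one_mul, mul_zero, add_zero, zero_add, smul_zero, hP, hD, hQ]
    congr 1 <;> module
  have hPh : P.IsHermitian := by
    rw [IsHermitian, hP]; simp [conjTranspose_smul, hA.1.eq, hB.1.eq]
  have hQh : Q.IsHermitian := by
    rw [IsHermitian, hQ]; simp [conjTranspose_smul, hA.1.eq, hB.1.eq]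
  have hle : LoewnerLE X' (fromBlocks (P + e ^ 2 • 1) 0 0 (Q + (e ^ 2)⁻¹ • (D * D))) := by
    have := posSemidef_conjTranspose_mul_self
      (fromBlocks (e • 1) (-(e⁻¹ • D)) 0 0 : Matrix (k ⊕ k) (k ⊕ k) ℂ)
    unfold LoewnerLE
    convert this using 1
    rw [hX'e, fromBlocks_conjTranspose, fromBlocks_multiply, sub_eq_add_neg, fromBlocks_neg,
      fromBlocks_add]
    simp only [conjTranspose_smul, conjTranspose_neg, hDh, conjTranspose_one, smul_mul_assoc, mul_smul_comm, mul_one,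
      smul_smul, star_trivial, one_mul, mul_zero, add_zero, zero_add, smul_zero, neg_mul, mul_neg, neg_neg,
      smul_neg, mul_inv_cancel₀ he.ne', inv_mul_cancel₀ he.ne', one_smul]
    congr 1
    · module
    · rw [show (e^2)⁻¹ = e⁻¹ * e⁻¹ by field_simp]; module
  have key := hf.2.2 _ _ _ hX' hle
  rw [hint, hXd, aux_block f A B hA.1 hB.1, aux_block f _ _ ?_ ?_] at key
  · unfold LoewnerLE at key
    have k2 := key.submatrix Sum.inl
    convert k2 using 1
    rw [hU, fromBlocks_conjTranspose, fromBlocks_multiply, fromBlocks_multiply]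
    simp only [conjTranspose_smul, conjTranspose_one, smul_mul_assoc, mul_smul_comm, mul_one,
      smul_smul, star_trivial, one_mul, mul_zero, add_zero, zero_add, smul_zero]
    ext i j
    simp [pow_two]
  · rw [IsHermitian, conjTranspose_add, hPh.eq]; simp [conjTranspose_smul]
  · rw [IsHermitian, conjTranspose_add, hQh.eq]; simp [conjTranspose_smul, hDh]

lemma aux_conc (f : ℝ → ℝ) (hf : OpMonotone f) {k : Type} [Fintype k] [DecidableEq k]
    (A B : Matrix k k ℂ) (hA : A.PosSemidef) (hB : B.PosSemidef) (c s : ℝ)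
    (hcs : c ^ 2 + s ^ 2 = 1) :
    (cfc f (c ^ 2 • A + s ^ 2 • B) - (c ^ 2 • cfc f A + s ^ 2 • cfc f B)).PosSemidef := by
  set P := c ^ 2 • A + s ^ 2 • B with hP
  have hPp : P.PosSemidef := (hA.smul (sq_nonneg c)).add (hB.smul (sq_nonneg s))
  set M := c ^ 2 • cfc f A + s ^ 2 • cfc f B with hM
  have hfh : ∀ Z : Matrix k k ℂ, (cfc f Z).IsHermitian := fun Z => cfc_predicate f Z
  have hspec : ∀ x ∈ spectrum ℝ P, 0 ≤ x :=
    aux_spec P hPp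
  have hd : ∀ d : ℝ, 0 < d → ((cfc f P + d • 1) - M).PosSemidef := by
    intro d hd
    have h1 : ∀ x ∈ spectrum ℝ P, ∀ᶠ e in nhdsWithin (0:ℝ) (Set.Ioi 0), f (x + e ^ 2) ≤ f x + d := by
      intro x hx
      have hx0 := hspec x hx
      have hc : Filter.Tendsto (fun e : ℝ => f (x + e ^ 2)) (nhdsWithin (0:ℝ) (Set.Ioi 0)) (nhds (f x)) := by
        have hc0 := hf.1 x hx0
        refine Filter.Tendsto.comp hc0 (tendsto_nhdsWithin_iff.mpr ⟨?_, ?_⟩)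
        · have : Continuous (fun e : ℝ => x + e ^ 2) := by fun_prop
          have := this.tendsto 0
          simp only [ne_eq, OfNat.ofNat_ne_zero, not_false_eq_true, zero_pow, add_zero] at this
          exact this.mono_left nhdsWithin_le_nhds
        · exact Filter.Eventually.of_forall fun e => by
            simp only [Set.mem_Ici]; positivity
      exact (hc.eventually (gt_mem_nhds (show f x < f x + d by linarith))).mono fun _ h => h.le
    have h2 := ((Filter.eventually_all_finite P.finite_real_spectrum).mpr h1).and
      self_mem_nhdsWithin
    obtain ⟨e, he, he0⟩ := h2.exists
    have h3 := aux_eps f hf A B hA hB c s e hcs he0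
    rw [← hP, ← hM] at h3
    have h4 : cfc f (P + e ^ 2 • 1) = cfc (fun x => f (x + e ^ 2)) P := by
      have hcc : ContinuousOn f ((fun x => x + e ^ 2) '' spectrum ℝ P) :=
        (P.finite_real_spectrum.image _).continuousOn _
      rw [cfc_comp' f (fun x => x + e ^ 2) P hcc (by fun_prop) hPp.1.isSelfAdjoint]
      congr 1
      rw [cfc_add_const (e ^ 2) (fun x => x) P (by fun_prop) hPp.1.isSelfAdjoint,
        cfc_id' ℝ P hPp.1.isSelfAdjoint, Algebra.algebraMap_eq_smul_one]
    have h5 : cfc f P + d • 1 = cfc (fun x => f x + d) P := by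
      rw [cfc_add_const d f P (P.finite_real_spectrum.continuousOn _) hPp.1.isSelfAdjoint, Algebra.algebraMap_eq_smul_one]
    have h6 : ((cfc f P + d • 1) - cfc f (P + e ^ 2 • 1)).PosSemidef := by
      rw [h4, h5]
      open scoped MatrixOrder in
      exact Matrix.le_iff.mp (cfc_mono he (P.finite_real_spectrum.continuousOn _) (P.finite_real_spectrum.continuousOn _))
    have := h6.add h3
    rwa [sub_add_sub_cancel] at this
  rw [posSemidef_iff_dotProduct_mulVec]
  constructor
  · refine (hfh P).sub ?_
    rw [IsHermitian, hM]; simp [conjTranspose_smul, (hfh A).eq, (hfh B).eq]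
  · intro x
    have ht : Filter.Tendsto (fun d : ℝ => star x ⬝ᵥ ((cfc f P + d • 1 - M) *ᵥ x))
        (nhdsWithin (0:ℝ) (Set.Ioi 0)) (nhds (star x ⬝ᵥ ((cfc f P - M) *ᵥ x))) := by
      have : Continuous (fun d : ℝ => star x ⬝ᵥ ((cfc f P + d • 1 - M) *ᵥ x)) := by
        fun_prop
      have := this.tendsto 0
      simp only [zero_smul, add_zero] at this
      exact this.mono_left nhdsWithin_le_nhds
    refine ge_of_tendsto ht ?_
    filter_upwards [self_mem_nhdsWithin] with d hd0
    exact (hd d hd0).dotProduct_mulVec_nonneg x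

lemma aux_scale_s6 (f : ℝ → ℝ) (hf : OpMonotone f) {k : Type} [Fintype k] [DecidableEq k]
    (G : Matrix k k ℂ) (hG : G.PosSemidef) (l : ℝ) (hl : 1 ≤ l) :
    (l • cfc f G - cfc f (l • G)).PosSemidef := by
  have hl0 : 0 < l := by linarith
  have hi : l⁻¹ ≤ 1 := inv_le_one_of_one_le₀ hl
  have h := aux_conc f hf (l • G) 0 (hG.smul hl0.le) PosSemidef.zero (√(l⁻¹)) (√(1 - l⁻¹))
    (by rw [Real.sq_sqrt (by positivity), Real.sq_sqrt (by linarith)]; ring)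
  rw [Real.sq_sqrt (by positivity), Real.sq_sqrt (by linarith), smul_smul,
    inv_mul_cancel₀ hl0.ne', one_smul, smul_zero, add_zero, cfc_apply_zero,
    Algebra.algebraMap_eq_smul_one] at h
  have h0 : ((1 - l⁻¹) • f 0 • (1 : Matrix k k ℂ)).PosSemidef :=
    (PosSemidef.one.smul (hf.2.1 0 le_rfl)).smul (by linarith)
  have h1 := (h.add h0).smul hl0.le
  convert h1 using 1
  rw [sub_add_eq_sub_sub, sub_add_cancel, smul_sub, smul_smul, mul_inv_cancel₀ hl0.ne', one_smul]

lemma aux_sqrt {k : Type} [Fintype k] [DecidableEq k] (X : Matrix k k ℂ) (hX : X.PosSemidef) :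
    msqrt X * msqrt X = X := by
  unfold msqrt
  have hc : ContinuousOn Real.sqrt (spectrum ℝ X) := X.finite_real_spectrum.continuousOn _
  rw [← cfc_mul Real.sqrt Real.sqrt X hc hc]
  conv_rhs => rw [← cfc_id' ℝ X hX.1.isSelfAdjoint]
  apply cfc_congr
  intro x hx
  exact Real.mul_self_sqrt (aux_spec X hX x hx)

lemma aux_sqrt_herm {k : Type} [Fintype k] [DecidableEq k] (X : Matrix k k ℂ) :
    (msqrt X)ᴴ = msqrt X := by
  have : (msqrt X).IsHermitian := cfc_predicate Real.sqrt X
  exact this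

lemma aux_gm {k : Type} [Fintype k] [DecidableEq k] (X Y : Matrix k k ℂ) (hX : X.PosDef)
    (hY : Y.PosSemidef) : ∃ S C : Matrix k k ℂ, S.IsHermitian ∧ S * S = X ∧ S * C * S = Y ∧
      C = S⁻¹ * Y * S⁻¹ ∧ IsUnit S.det ∧ S⁻¹.IsHermitian ∧
      C.PosSemidef ∧ gmean X Y = S * msqrt C * S := by
  have hS := aux_sqrt X hX.posSemidef
  have hSh : (msqrt X).IsHermitian := aux_sqrt_herm X
  have hu : IsUnit (msqrt X).det := by
    have := hX.isUnit
    rw [isUnit_iff_isUnit_det, ← hS, det_mul] at this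
    exact isUnit_of_mul_isUnit_left this
  have hSi : ((msqrt X)⁻¹).IsHermitian := hSh.inv
  refine ⟨msqrt X, (msqrt X)⁻¹ * Y * (msqrt X)⁻¹, hSh, hS, ?_, rfl, hu, hSi, ?_, rfl⟩
  · rw [mul_assoc (msqrt X)⁻¹, ← mul_assoc (msqrt X), mul_nonsing_inv _ hu, one_mul, mul_assoc, nonsing_inv_mul _ hu, mul_one]
  · have := hY.conjTranspose_mul_mul_same (msqrt X)⁻¹
    rwa [hSi.eq] at this

lemma aux_amgm {k : Type} [Fintype k] [DecidableEq k] (X Y : Matrix k k ℂ) (hX : X.PosDef)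
    (hY : Y.PosSemidef) : ((2 : ℝ)⁻¹ • X + (2 : ℝ)⁻¹ • Y - gmean X Y).PosSemidef := by
  obtain ⟨S, C, hSh, hS, hC, -, -, -, hCp, hg⟩ := aux_gm X Y hX hY
  have hR := aux_sqrt C hCp
  have hRh := aux_sqrt_herm C
  rw [hg]
  have h := ((posSemidef_conjTranspose_mul_self ((1 - msqrt C) * S)).smul
    (show (0:ℝ) ≤ 2⁻¹ by norm_num))
  convert h using 1
  rw [conjTranspose_mul, conjTranspose_sub, hRh, hSh.eq, conjTranspose_one]
  have : S * (1 - msqrt C) * ((1 - msqrt C) * S) =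
      S * S - (2:ℝ) • (S * msqrt C * S) + S * (msqrt C * msqrt C) * S := by
    rw [two_smul]; noncomm_ring
  rw [this, hR, hS, hC]
  module

lemma aux_psd_gm {k : Type} [Fintype k] [DecidableEq k] (X Y : Matrix k k ℂ) (hX : X.PosDef)
    (hY : Y.PosSemidef) : (gmean X Y).PosSemidef := by
  obtain ⟨S, C, hSh, hS, hC, -, -, -, hCp, hg⟩ := aux_gm X Y hX hY
  rw [hg]
  have : (msqrt C).PosSemidef := by
    open scoped MatrixOrder in
    exact Matrix.nonneg_iff_posSemidef.mp (cfc_nonneg fun x _ => Real.sqrt_nonneg x)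
  have := this.conjTranspose_mul_mul_same S
  rwa [hSh.eq] at this

lemma aux_rev {k : Type} [Fintype k] [DecidableEq k] (A B : Matrix k k ℂ) (hA : A.PosDef)
    (hB : B.PosSemidef) (s t : ℝ) (hs : 0 < s) (hst : s ≤ t) (h1 : 1 ≤ s * t)
    (hsA : LoewnerLE (s • A) B) (htA : LoewnerLE B (t • A)) :
    (((√s + √t) / 2) • gmean A B - ((2 : ℝ)⁻¹ • A + (2 : ℝ)⁻¹ • B)).PosSemidef := by
  obtain ⟨S, C, hSh, hS, hC, hCd, hu, hSi, hCp, hg⟩ := aux_gm A B hA hB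
  have hone : S⁻¹ * A * S⁻¹ = 1 := by
    rw [← hS, ← mul_assoc, nonsing_inv_mul _ hu, one_mul, mul_nonsing_inv _ hu]
  have hlo : (C - s • 1).PosSemidef := by
    have := hsA.conjTranspose_mul_mul_same S⁻¹
    rw [hSi.eq, mul_sub, sub_mul, ← hCd, mul_smul_comm, smul_mul_assoc, hone] at this
    exact this
  have hhi : (t • 1 - C).PosSemidef := by
    have := htA.conjTranspose_mul_mul_same S⁻¹
    rw [hSi.eq, mul_sub, sub_mul, ← hCd, mul_smul_comm, smul_mul_assoc, hone] at this
    exact this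
  have hsp : ∀ x ∈ spectrum ℝ C, s ≤ x := by
    open scoped MatrixOrder in
    exact (algebraMap_le_iff_le_spectrum hCp.1.isSelfAdjoint).mp (Matrix.le_iff.mpr (by
      rw [Algebra.algebraMap_eq_smul_one]; exact hlo))
  have hsp' : ∀ x ∈ spectrum ℝ C, x ≤ t := by
    open scoped MatrixOrder in
    exact (le_algebraMap_iff_spectrum_le hCp.1.isSelfAdjoint).mp (Matrix.le_iff.mpr (by
      rw [Algebra.algebraMap_eq_smul_one]; exact hhi))
  have hc : ∀ g : ℝ → ℝ, ContinuousOn g (spectrum ℝ C) := fun g =>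
    C.finite_real_spectrum.continuousOn _
  have hmain : (((√s + √t) / 2) • msqrt C - ((2 : ℝ)⁻¹ • 1 + (2 : ℝ)⁻¹ • C)).PosSemidef := by
    have e1 : ((√s + √t) / 2) • msqrt C = cfc (fun x => ((√s + √t) / 2) • √x) C :=
      (cfc_smul _ _ C (hc _)).symm
    have e2 : ((2 : ℝ)⁻¹ • (1 : Matrix k k ℂ) + (2 : ℝ)⁻¹ • C) =
        cfc (fun x : ℝ => (2:ℝ)⁻¹ + (2 : ℝ)⁻¹ • x) C := by
      rw [cfc_const_add _ _ C (hc _) hCp.1.isSelfAdjoint, cfc_smul _ _ C (hc _),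
        cfc_id' ℝ C hCp.1.isSelfAdjoint, Algebra.algebraMap_eq_smul_one]
    rw [e1, e2]
    open scoped MatrixOrder in
    refine Matrix.le_iff.mp (cfc_mono ?_ (hc _) (hc _))
    intro x hx
    have hx1 := hsp x hx
    have hx2 := hsp' x hx
    have a1 := Real.sqrt_le_sqrt hx1
    have a2 := Real.sqrt_le_sqrt hx2
    have a3 := Real.mul_self_sqrt (hs.le.trans hx1)
    have a4 : 1 ≤ √s * √t := by
      rw [← Real.sqrt_mul hs.le]; exact Real.one_le_sqrt.mpr h1
    simp only [smul_eq_mul]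
    nlinarith [mul_nonneg (sub_nonneg.mpr a1) (sub_nonneg.mpr a2)]
  have h2 := hmain.conjTranspose_mul_mul_same S
  convert h2 using 1
  rw [hSh.eq, hg]
  simp only [mul_sub, sub_mul, mul_add, add_mul, mul_smul_comm, smul_mul_assoc, hC, mul_one, hS]

theorem polya_szego_monotone_geom_st_ge_one {n m : Type} [Fintype n] [DecidableEq n] [Fintype m] [DecidableEq m]
    (Φ : Matrix n n ℂ →ₗ[ℂ] Matrix m m ℂ)
    (hΦ : ∀ X : Matrix n n ℂ, X.PosSemidef → (Φ X).PosSemidef)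
    (hΦ' : ∀ X : Matrix n n ℂ, X.PosDef → (Φ X).PosDef)
    (f : ℝ → ℝ) (hf : OpMonotone f) (hf' : ∀ x : ℝ, 0 < x → 0 < f x)
    (A B : Matrix n n ℂ) (hA : A.PosDef) (hB : B.PosDef)
    (s t : ℝ) (hs : 0 < s) (hst : s ≤ t) (h1 : 1 ≤ s * t)
    (hsA : LoewnerLE (s • A) B) (htA : LoewnerLE B (t • A)) :
    LoewnerLE (gmean (Φ (cfc f A)) (Φ (cfc f B)))
      ((((Real.sqrt s + Real.sqrt t) / 2) ^ 2) • Φ (cfc f (gmean A B))) := by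
  have hfp : ∀ X : Matrix n n ℂ, X.PosDef → (cfc f X).PosDef := by
    intro X hX
    open scoped MatrixOrder in
    rw [← isStrictlyPositive_iff_posDef] at hX ⊢
    rw [cfc_isStrictlyPositive_iff f X (X.finite_real_spectrum.continuousOn _) hX.isSelfAdjoint]
    exact fun x hx => hf' x (hX.spectrum_pos hx)
  set l := (√s + √t) / 2 with hl
  have hl1 : 1 ≤ l := by
    have a4 : 1 ≤ √s * √t := by
      rw [← Real.sqrt_mul hs.le]; exact Real.one_le_sqrt.mpr h1
    have := Real.sqrt_nonneg s
    have := Real.sqrt_nonneg t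
    nlinarith [sq_nonneg (√s - √t), sq_nonneg (√s + √t)]
  set G := gmean A B with hG
  have hGp : G.PosSemidef := aux_psd_gm A B hA hB.posSemidef
  have hAB : ((2:ℝ)⁻¹ • A + (2:ℝ)⁻¹ • B).PosSemidef :=
    (hA.posSemidef.smul (by norm_num)).add (hB.posSemidef.smul (by norm_num))
  have s1 := aux_amgm _ _ (hΦ' _ (hfp A hA)) (hΦ' _ (hfp B hB)).posSemidef
  have s2 := aux_conc f hf A B hA.posSemidef hB.posSemidef (√2⁻¹) (√2⁻¹)
    (by rw [Real.sq_sqrt (by norm_num)]; norm_num)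
  rw [Real.sq_sqrt (by norm_num)] at s2
  have s3 := hf.2.2 _ _ _ hAB (aux_rev A B hA hB.posSemidef s t hs hst h1 hsA htA)
  have s4 := aux_scale_s6 f hf G hGp l hl1
  have s5 : ((l ^ 2 - l) • cfc f G).PosSemidef := by
    refine PosSemidef.smul ?_ (by nlinarith)
    open scoped MatrixOrder in
    exact Matrix.nonneg_iff_posSemidef.mp (cfc_nonneg fun x hx => hf.2.1 x
      (aux_spec G hGp x hx))
  have s6 := hΦ _ (((s2.add s3).add s4).add s5)
  have hr : ∀ (r : ℝ) (X : Matrix n n ℂ), Φ (r • X) = r • Φ X := fun r X =>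
    LinearMap.map_smul_of_tower Φ r X
  have s7 := s6.add s1
  unfold LoewnerLE
  convert s7 using 1
  simp only [map_add, map_sub, hr]
  rw [← hG, ← hl]
  module
end

section
/- Let Φ be a positive linear map from n×n to m×m complex matrices, let g : ℝ → ℝ be operator monotone decreasing on (0,∞), and let A, B be positive definite n×n complex matrices with s·A ≤ B ≤ t·A for some scalars 0 < s ≤ t with s·t ≥ 1. Then Φ(g(A ! B)) ≤ ((√s+√t)/2)²·(Φ(g(A)) + Φ(g(B)))/2. -/
open Matrix ComplexOrder

section aux
open scoped MatrixOrder
set_option linter.unusedSectionVars false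
set_option linter.unusedSimpArgs false
variable {n : Type} [Fintype n] [DecidableEq n]

lemma aux_cont (g : ℝ → ℝ) (A : Matrix n n ℂ) : ContinuousOn g (spectrum ℝ A) :=
  A.finite_real_spectrum.continuousOn g

lemma aux_psd_smul {A : Matrix n n ℂ} (hA : A.PosSemidef) {r : ℝ} (hr : 0 ≤ r) :
    (r • A).PosSemidef := hA.smul hr

lemma aux_pd_smul {A : Matrix n n ℂ} (hA : A.PosDef) {r : ℝ} (hr : 0 < r) :
    (r • A).PosDef := hA.smul hr

/-- common interpolating polynomial -/
lemma aux_interp (g : ℝ → ℝ) (S : Set ℝ) (hS : S.Finite) :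
    ∃ p : Polynomial ℝ, ∀ x ∈ S, p.eval x = g x := by
  refine ⟨Lagrange.interpolate hS.toFinset id g, fun x hx => ?_⟩
  exact Lagrange.eval_interpolate_at_node (v := id) g (Function.injective_id.injOn)
    (hS.mem_toFinset.2 hx)

lemma aux_cfc_poly (g : ℝ → ℝ) (p : Polynomial ℝ) (A : Matrix n n ℂ) (hA : A.IsHermitian)
    (h : ∀ x ∈ spectrum ℝ A, p.eval x = g x) : cfc g A = Polynomial.aeval A p := by
  rw [← cfc_polynomial p A hA]
  exact cfc_congr fun x hx => (h x hx).symm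

/-- rotation matrix -/
noncomputable def rotU (n : Type) [DecidableEq n] (c d : ℝ) : Matrix (n ⊕ n) (n ⊕ n) ℂ :=
  fromBlocks (c • 1) (d • 1) ((-d) • 1) (c • 1)

noncomputable def rotM (c d : ℝ) (A B : Matrix n n ℂ) : Matrix (n ⊕ n) (n ⊕ n) ℂ :=
  fromBlocks ((c^2) • A + (d^2) • B) ((c*d) • (B - A)) ((c*d) • (B - A)) ((d^2) • A + (c^2) • B)

lemma rotU_conj (c d : ℝ) : (rotU n c d)ᴴ = rotU n c (-d) := by
  simp [rotU, fromBlocks_conjTranspose, conjTranspose_smul]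

lemma rotU_mul (c d : ℝ) (h : c^2 + d^2 = 1) : rotU n c d * rotU n c (-d) = 1 := by
  rw [← fromBlocks_one]
  simp only [rotU, fromBlocks_multiply]
  simp only [smul_mul_smul_comm, mul_one, ← add_smul]
  congr 1
  · convert one_smul ℝ _ using 2; linarith
  · convert zero_smul ℝ _ using 2; ring
  · convert zero_smul ℝ _ using 2; ring
  · convert one_smul ℝ _ using 2; linarith

lemma rotM_eq (c d : ℝ) (A B : Matrix n n ℂ) :
    rotM c d A B = rotU n c d * fromBlocks A 0 0 B * (rotU n c d)ᴴ := by
  rw [rotU_conj]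
  simp only [rotU, rotM, fromBlocks_multiply]
  simp only [smul_mul_assoc, mul_smul_comm, one_mul, mul_one, mul_zero, zero_mul, smul_zero,
    add_zero, zero_add]
  congr 1 <;> module

lemma rotM_mul (c d : ℝ) (h : c^2 + d^2 = 1) (A B A' B' : Matrix n n ℂ) :
    rotM c d A B * rotM c d A' B' = rotM c d (A * A') (B * B') := by
  have hU : (rotU n c d)ᴴ * rotU n c d = 1 := by
    have := rotU_mul (n := n) c (-d) (by simpa using h)
    rwa [neg_neg, ← rotU_conj] at this
  have hF : fromBlocks A 0 0 B * fromBlocks A' 0 0 B' =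
    fromBlocks (A * A') 0 0 (B * B') := by simp [fromBlocks_multiply]
  simp only [rotM_eq]
  rw [← hF]
  calc _ = rotU n c d * fromBlocks A 0 0 B * ((rotU n c d)ᴴ * rotU n c d) *
        fromBlocks A' 0 0 B' * (rotU n c d)ᴴ := by simp only [mul_assoc]
    _ = _ := by rw [hU]; simp only [mul_assoc, one_mul]

lemma rotM_algebraMap (c d : ℝ) (h : c^2 + d^2 = 1) (r : ℝ) :
    rotM c d (algebraMap ℝ (Matrix n n ℂ) r) (algebraMap ℝ (Matrix n n ℂ) r) =
      algebraMap ℝ _ r := by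
  simp only [Algebra.algebraMap_eq_smul_one]
  rw [← fromBlocks_one, fromBlocks_smul, rotM]
  congr 1
  · rw [← add_smul, h, one_smul]
  · simp
  · simp
  · rw [← add_smul, add_comm, h, one_smul]

lemma rotM_add (c d : ℝ) (A B A' B' : Matrix n n ℂ) :
    rotM c d A B + rotM c d A' B' = rotM c d (A + A') (B + B') := by
  simp only [rotM, fromBlocks_add]
  congr 1 <;> module

lemma rotM_aeval (c d : ℝ) (h : c^2 + d^2 = 1) (A B : Matrix n n ℂ) (p : Polynomial ℝ) :
    Polynomial.aeval (rotM c d A B) p =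
      rotM c d (Polynomial.aeval A p) (Polynomial.aeval B p) := by
  induction p using Polynomial.induction_on with
  | C r => simp [rotM_algebraMap c d h]
  | add p q hp hq => simp [hp, hq, rotM_add]
  | monomial k r ih =>
    rw [pow_succ, ← mul_assoc, map_mul, ih, Polynomial.aeval_X, rotM_mul c d h]
    simp

lemma rotM_herm (c d : ℝ) (A B : Matrix n n ℂ) (hA : A.IsHermitian) (hB : B.IsHermitian) :
    (rotM c d A B).IsHermitian := by
  unfold Matrix.IsHermitian at *
  rw [rotM, fromBlocks_conjTranspose]
  simp [hA, hB]

lemma rotM_cfc (g : ℝ → ℝ) (c d : ℝ) (h : c^2 + d^2 = 1) (A B : Matrix n n ℂ)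
    (hA : A.IsHermitian) (hB : B.IsHermitian) :
    cfc g (rotM c d A B) = rotM c d (cfc g A) (cfc g B) := by
  obtain ⟨p, hp⟩ := aux_interp g (spectrum ℝ A ∪ spectrum ℝ B ∪ spectrum ℝ (rotM c d A B))
    ((A.finite_real_spectrum.union B.finite_real_spectrum).union (finite_real_spectrum))
  rw [aux_cfc_poly g p A hA fun x hx => hp x (by simp [hx]),
    aux_cfc_poly g p B hB fun x hx => hp x (by simp [hx]),
    aux_cfc_poly g p _ (rotM_herm c d A B hA hB) fun x hx => hp x (by simp [hx]),
    rotM_aeval c d h]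

lemma rotM_one_zero (A B : Matrix n n ℂ) : rotM 1 0 A B = fromBlocks A 0 0 B := by
  simp [rotM]

lemma diag_pd (A B : Matrix n n ℂ) (hA : A.PosDef) (hB : B.PosDef) :
    (fromBlocks A 0 0 B).PosDef := by
  have hu := hA.isUnit.invertible
  have h1 : (fromBlocks A 0 0 B).PosSemidef := by
    have := (PosDef.fromBlocks₁₁ (0 : Matrix n n ℂ) B hA).2 (by simpa using hB.posSemidef)
    simpa using this
  rw [h1.posDef_iff_det_ne_zero, det_fromBlocks_zero₁₂]
  exact mul_ne_zero hA.det_pos.ne' hB.det_pos.ne'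

lemma rotM_pd (c d : ℝ) (h : c^2 + d^2 = 1) (A B : Matrix n n ℂ) (hA : A.PosDef)
    (hB : B.PosDef) : (rotM c d A B).PosDef := by
  rw [rotM_eq]
  have hu : IsUnit (rotU n c d) := IsUnit.of_mul_eq_one _ (rotU_mul c d h)
  exact (Matrix.IsUnit.posDef_star_right_conjugate_iff hu).2 (diag_pd A B hA hB)

/-- corner comparison -/
lemma corner {g : ℝ → ℝ} (hg : OpAntitone g) (c d : ℝ) (h : c^2 + d^2 = 1) (A B P R : Matrix n n ℂ)
    (hA : A.PosDef) (hB : B.PosDef) (hP : P.PosDef) (hR : R.PosDef)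
    (hle : LoewnerLE (rotM c d A B) (fromBlocks P 0 0 R)) :
    LoewnerLE (cfc g P) ((c^2) • cfc g A + (d^2) • cfc g B) := by
  have := hg.2.2 (n ⊕ n) _ _ (rotM_pd c d h A B hA hB) (diag_pd P R hP hR) hle
  rw [rotM_cfc g c d h A B hA.1 hB.1, ← rotM_one_zero P R,
    rotM_cfc g 1 0 (by simp) P R hP.1 hR.1] at this
  unfold LoewnerLE at this
  have h2 := this.submatrix Sum.inl
  unfold LoewnerLE
  convert h2 using 1
  ext i j
  simp [rotM]

lemma corner' {g : ℝ → ℝ} (hg : OpAntitone g) (c d : ℝ) (h : c^2 + d^2 = 1) (A B P R : Matrix n n ℂ)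
    (hA : A.PosDef) (hB : B.PosDef) (hP : P.PosDef) (hR : R.PosDef)
    (hle : LoewnerLE (fromBlocks P 0 0 R) (rotM c d A B)) :
    LoewnerLE ((c^2) • cfc g A + (d^2) • cfc g B) (cfc g P) := by
  have := hg.2.2 (n ⊕ n) _ _ (diag_pd P R hP hR) (rotM_pd c d h A B hA hB) hle
  rw [rotM_cfc g c d h A B hA.1 hB.1, ← rotM_one_zero P R,
    rotM_cfc g 1 0 (by simp) P R hP.1 hR.1] at this
  unfold LoewnerLE at this
  have h2 := this.submatrix Sum.inl
  unfold LoewnerLE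
  convert h2 using 1
  ext i j
  simp [rotM]


lemma psd2 (x y r : ℝ) (hy : 0 < y) (h : r^2 ≤ x * y) :
    (fromBlocks (x • 1) (r • 1) (r • 1) (y • 1) : Matrix (n ⊕ n) (n ⊕ n) ℂ).PosSemidef := by
  have key := posSemidef_self_mul_conjTranspose
    (fromBlocks (Real.sqrt (x - r^2 / y) • 1) ((r / Real.sqrt y) • 1) 0
      (Real.sqrt y • 1) : Matrix (n ⊕ n) (n ⊕ n) ℂ)
  convert key using 1
  have h0 : 0 ≤ x - r^2 / y := by
    rw [sub_nonneg, div_le_iff₀ hy]; exact h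
  have hs : Real.sqrt y ≠ 0 := (Real.sqrt_pos.2 hy).ne'
  rw [fromBlocks_conjTranspose, fromBlocks_multiply]
  simp only [conjTranspose_smul, conjTranspose_one, conjTranspose_zero, star_trivial,
    smul_mul_smul_comm, mul_one, ← add_smul, zero_mul, mul_zero, zero_add]
  congr 2
  · rw [Real.mul_self_sqrt h0, div_mul_div_comm, Real.mul_self_sqrt hy.le]; ring
  · field_simp
  · field_simp
  · rw [Real.mul_self_sqrt hy.le]

lemma g_scal {g : ℝ → ℝ} (hg : OpAntitone g) (a K L : ℝ) (ha : 0 < a) (hK : 1 ≤ K) (hL : K < L) :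
    g a ≤ L * g (K * a) := by
  obtain ⟨l, hl⟩ : ∃ l, l = L⁻¹ := ⟨_, rfl⟩
  have hL0 : 0 < L := by linarith
  have hl0 : 0 < l := by rw [hl]; positivity
  have hl1 : l < 1 := by rw [hl]; exact inv_lt_one_of_one_lt₀ (by linarith)
  have hlL : l * L = 1 := by rw [hl]; field_simp
  obtain ⟨μ, hμ⟩ : ∃ μ, μ = 1 - K * l := ⟨_, rfl⟩
  have hμ0 : 0 < μ := by nlinarith
  have hμ1 : μ < 1 := by nlinarith
  obtain ⟨b, hb⟩ : ∃ b, b = 2 * K * a / μ := ⟨_, rfl⟩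
  have hbμ : b * μ = 2 * K * a := by rw [hb]; field_simp
  have hb0 : 0 < b := by rw [hb]; positivity
  have hba : a < b := by nlinarith
  obtain ⟨q, hq⟩ : ∃ q, q = K * a^2 / (a + b) := ⟨_, rfl⟩
  have hq0 : 0 < q := by rw [hq]; positivity
  have hqab : q * (a + b) = K * a^2 := by rw [hq]; field_simp
  have hqa : q < a := by
    by_contra hcon
    push Not at hcon
    have h2 : 2 * K * a ≤ b := by nlinarith
    have h3 : a * (2 * K * a) ≤ a * b := by gcongr
    have h4 : 0 < K * a * a := by positivity
    nlinarith [mul_le_mul_of_nonneg_right hcon (by linarith : 0 ≤ a + b)]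
  obtain ⟨c, hc⟩ : ∃ c, c = Real.sqrt l := ⟨_, rfl⟩
  obtain ⟨d, hd⟩ : ∃ d, d = Real.sqrt (1 - l) := ⟨_, rfl⟩
  have hc2 : c^2 = l := by rw [hc]; exact Real.sq_sqrt hl0.le
  have hd2 : d^2 = 1 - l := by rw [hd]; exact Real.sq_sqrt (by linarith)
  have pd : ∀ x : ℝ, 0 < x → (x • (1 : Matrix Unit Unit ℂ)).PosDef := fun x hx =>
    aux_pd_smul PosDef.one hx
  have cf : ∀ x : ℝ, cfc g (x • (1 : Matrix Unit Unit ℂ)) = g x • 1 := fun x => by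
    rw [← Algebra.algebraMap_eq_smul_one, cfc_algebraMap, Algebra.algebraMap_eq_smul_one]
  have hle : LoewnerLE (fromBlocks ((K * a) • (1 : Matrix Unit Unit ℂ)) 0 0 (q • 1))
      (rotM c d (a • 1) (b • 1)) := by
    have hy : 0 < (1 - l) * a + l * b - q := by nlinarith
    have := psd2 (n := Unit) (l * a + (1 - l) * b - K * a) ((1 - l) * a + l * b - q)
      (c * d * (b - a)) hy (by
        have e : (c * d * (b - a))^2 = l * (1 - l) * (b - a)^2 := by
          rw [mul_pow, mul_pow, hc2, hd2]
        rw [e]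
        have e2 : (l * a + (1 - l) * b - K * a) * ((1 - l) * a + l * b - q)
          - l * (1 - l) * (b - a)^2 = a * (b * μ) - K * a * (1 - l) * a - q * (a + b)
            + q * ((1 - l) * a + l * b) + K * a * q := by rw [hμ]; ring
        have e3 : 0 ≤ q * ((1 - l) * a + l * b) := by
          have : 0 < 1 - l := by linarith
          positivity
        have e4 : 0 ≤ K * a * q := by positivity
        have e5 : 0 ≤ K * a * l * a := by positivity
        rw [hbμ, hqab] at e2
        nlinarith)
    unfold LoewnerLE
    convert this using 1
    rw [rotM, hc2, hd2, sub_eq_add_neg, fromBlocks_neg, fromBlocks_add]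
    congr 1 <;> module
  have := corner' hg c d (by rw [hc2, hd2]; ring) (a • 1) (b • 1) ((K * a) • 1) (q • 1)
    (pd a ha) (pd b hb0) (pd _ (by positivity)) (pd q hq0) hle
  rw [cf, cf, cf, hc2, hd2] at this
  have h2 := PosSemidef.diag_nonneg this (i := ())
  have h3 : l * g a + (1 - l) * g b ≤ g (K * a) := by
    simp at h2
    exact_mod_cast h2
  have hgb := hg.2.1 b hb0
  have h4 : l * g a ≤ g (K * a) := by
    have : 0 ≤ (1 - l) * g b := mul_nonneg (by linarith) hgb
    linarith
  calc g a = L * (l * g a) := by rw [← mul_assoc, mul_comm L, hlL, one_mul]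
    _ ≤ _ := by gcongr

lemma g_conv {g : ℝ → ℝ} (hg : OpAntitone g) (A B : Matrix n n ℂ) (hA : A.PosDef) (hB : B.PosDef)
    (e : ℝ) (he : 0 < e) :
    LoewnerLE (cfc g ((1 + e^2) • ((2:ℝ)⁻¹ • (A + B)))) ((2:ℝ)⁻¹ • (cfc g A + cfc g B)) := by
  obtain ⟨c, hc⟩ : ∃ c, c = Real.sqrt (2⁻¹) := ⟨_, rfl⟩
  have hc2 : c^2 = 2⁻¹ := by rw [hc]; exact Real.sq_sqrt (by norm_num)
  have h1 : c^2 + c^2 = 1 := by rw [hc2]; norm_num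
  have hP : ((2:ℝ)⁻¹ • (A + B)).PosDef := aux_pd_smul (hA.add hB) (by norm_num)
  have := corner hg c c h1 A B ((1 + e^2) • ((2:ℝ)⁻¹ • (A + B)))
    ((1 + e⁻¹^2) • ((2:ℝ)⁻¹ • (A + B))) hA hB (aux_pd_smul hP (by positivity))
    (aux_pd_smul hP (by positivity)) (by
      have k := (rotM_pd c c h1 A B hA hB).posSemidef.mul_mul_conjTranspose_same
        (fromBlocks (e • 1) 0 0 ((-e⁻¹) • 1) : Matrix (n ⊕ n) (n ⊕ n) ℂ)
      unfold LoewnerLE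
      convert k using 1
      rw [rotM, fromBlocks_conjTranspose, fromBlocks_multiply, fromBlocks_multiply,
        sub_eq_add_neg, fromBlocks_neg, fromBlocks_add, hc2, ← sq, hc2]
      simp only [conjTranspose_smul, conjTranspose_one, conjTranspose_zero, star_trivial,
        smul_mul_assoc, mul_smul_comm, one_mul, mul_one, mul_zero, zero_mul, add_zero, zero_add,
        smul_smul]
      congr 1
      · module
      · match_scalars <;> field_simp
      · match_scalars <;> field_simp
      · match_scalars <;> field_simp <;> ring)
  rw [hc2, ← smul_add] at this
  exact this

lemma quad (A B : Matrix n n ℂ) (hA : A.PosDef) (s t : ℝ) (hst : s ≤ t)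
    (hE : (B - s • A).PosSemidef) (hF : (t • A - B).PosSemidef) :
    ((s + t) • B - (s * t) • A - B * A⁻¹ * B).PosSemidef := by
  have hu : IsUnit A.det := (Matrix.isUnit_iff_isUnit_det A).1 hA.isUnit
  have i1 := Matrix.mul_nonsing_inv A hu
  have i2 := Matrix.nonsing_inv_mul A hu
  have i3 : B * A⁻¹ * A = B := by rw [mul_assoc, i2, mul_one]
  have G1 : (B - s • A) * A⁻¹ * (t • A - B) = (s + t) • B - (s * t) • A - B * A⁻¹ * B := by
    simp only [sub_mul, mul_sub, smul_mul_assoc, mul_smul_comm, i1, one_mul, i3]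
    module
  have G2 : (t • A - B) * A⁻¹ * (B - s • A) = (s + t) • B - (s * t) • A - B * A⁻¹ * B := by
    simp only [sub_mul, mul_sub, smul_mul_assoc, mul_smul_comm, i1, one_mul, i3]
    module
  rcases hst.eq_or_lt with rfl | hlt
  · have : B - s • A = 0 := by
      apply le_antisymm
      · rw [Matrix.le_iff]; simpa using hF
      · rw [Matrix.le_iff]; simpa using hE
    rw [← G1, this]; simpa using PosSemidef.zero
  · have hi : A⁻¹ᴴ = A⁻¹ := hA.inv.1
    have p1 := hF.mul_mul_conjTranspose_same ((B - s • A) * A⁻¹)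
    have p2 := hE.mul_mul_conjTranspose_same ((t • A - B) * A⁻¹)
    rw [conjTranspose_mul, hi, hE.1, G1] at p1
    rw [conjTranspose_mul, hi, hF.1, G2] at p2
    have p3 := aux_psd_smul (p1.add p2) (inv_nonneg.2 (sub_nonneg.2 hst))
    convert p3 using 1
    rw [← mul_add, ← mul_add]
    have : B - s • A + (t • A - B) = (t - s) • A := by module
    rw [this, mul_smul_comm, i2, mul_smul_comm, mul_one, smul_smul, inv_mul_cancel₀, one_smul]
    linarith

lemma hm_le (A B : Matrix n n ℂ) (hA : A.PosDef) (hB : B.PosDef)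
    (s t : ℝ) (hs : 0 < s) (hst : s ≤ t) (h1 : 1 ≤ s * t)
    (hsA : LoewnerLE (s • A) B) (htA : LoewnerLE B (t • A)) :
    LoewnerLE ((((Real.sqrt s + Real.sqrt t) / 2) ^ 2)⁻¹ • ((2:ℝ)⁻¹ • (A + B))) (hmean A B) := by
  have ht : 0 < t := by linarith
  obtain ⟨r, hr⟩ : ∃ r, r = Real.sqrt s * Real.sqrt t := ⟨_, rfl⟩
  have hr2 : r^2 = s * t := by rw [hr, mul_pow, Real.sq_sqrt hs.le, Real.sq_sqrt ht.le]
  have hr0 : 0 ≤ r := by rw [hr]; positivity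
  have hr1 : 1 ≤ r := by nlinarith
  obtain ⟨K, hK⟩ : ∃ K, K = ((Real.sqrt s + Real.sqrt t) / 2) ^ 2 := ⟨_, rfl⟩
  have hK4 : 4 * K = s + t + 2 * r := by
    rw [hK, hr]
    nlinarith [Real.sq_sqrt hs.le, Real.sq_sqrt ht.le]
  have hK0 : 0 < K := by linarith
  rw [← hK]
  obtain ⟨P, hPd⟩ : ∃ P, P = (2:ℝ)⁻¹ • (A + B) := ⟨_, rfl⟩
  obtain ⟨J, hJd⟩ : ∃ J, J = (2:ℝ)⁻¹ • (A⁻¹ + B⁻¹) := ⟨_, rfl⟩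
  have hP : P.PosDef := hPd ▸ aux_pd_smul (hA.add hB) (by norm_num)
  have hJ : J.PosDef := hJd ▸ aux_pd_smul (hA.inv.add hB.inv) (by norm_num)
  have q1 := quad A B hA s t hst hsA htA
  have q2 := quad B A hB t⁻¹ s⁻¹ (inv_anti₀ hs hst) (by
      have := aux_psd_smul htA (inv_nonneg.2 ht.le)
      rwa [smul_sub, smul_smul, inv_mul_cancel₀ ht.ne', one_smul] at this) (by
      have := aux_psd_smul hsA (inv_nonneg.2 hs.le)
      rwa [smul_sub, smul_smul, inv_mul_cancel₀ hs.ne', one_smul] at this)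
  have hα : 0 ≤ 4 * K - 3 + s * t - s⁻¹ - t⁻¹ := by
    have : s⁻¹ ≤ t := by rw [inv_le_iff_one_le_mul₀ hs]; linarith
    have : t⁻¹ ≤ s := by rw [inv_le_iff_one_le_mul₀ ht]; linarith
    linarith
  have hβ : 0 ≤ 4 * K - 3 - (s + t) + t⁻¹ * s⁻¹ := by
    have e : t⁻¹ * s⁻¹ = (r^2)⁻¹ := by rw [hr2, mul_inv, mul_comm]
    rw [e, hK4]
    have : s + t + 2 * r - 3 - (s + t) + (r^2)⁻¹ = (r - 1)^2 * (2 * r + 1) / r^2 := by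
      field_simp; ring
    rw [this]; positivity
  have sum := aux_psd_smul (((q1.add q2).add (aux_psd_smul hA.posSemidef hα)).add
    (aux_psd_smul hB.posSemidef hβ)) (by norm_num : (0:ℝ) ≤ 1/8)
  have uA : IsUnit A.det := (Matrix.isUnit_iff_isUnit_det A).1 hA.isUnit
  have uB : IsUnit B.det := (Matrix.isUnit_iff_isUnit_det B).1 hB.isUnit
  have uP : IsUnit P.det := (Matrix.isUnit_iff_isUnit_det P).1 hP.isUnit
  have uJ : IsUnit J.det := (Matrix.isUnit_iff_isUnit_det J).1 hJ.isUnit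
  have e1 : P * J * P = (1/8 : ℝ) • ((3:ℝ) • A + (3:ℝ) • B + B * A⁻¹ * B + A * B⁻¹ * A) := by
    rw [hPd, hJd]
    simp only [smul_mul_assoc, mul_smul_comm, add_mul, mul_add, smul_add,
      Matrix.mul_nonsing_inv A uA, Matrix.mul_nonsing_inv B uB, one_mul]
    simp only [mul_assoc, Matrix.nonsing_inv_mul A uA, Matrix.nonsing_inv_mul B uB, mul_one]
    module
  have e2 : (K • P - P * J * P).PosSemidef := by
    convert sum using 1
    rw [e1, hPd]
    module
  have e3 : (K • P⁻¹ - J).PosSemidef := by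
    have := e2.mul_mul_conjTranspose_same P⁻¹
    rw [hP.inv.1] at this
    convert this using 1
    rw [mul_sub, sub_mul, mul_smul_comm, Matrix.nonsing_inv_mul P uP, smul_mul_assoc, one_mul]
    congr 1
    rw [mul_assoc, mul_assoc, mul_assoc, Matrix.mul_nonsing_inv P uP, mul_one, ← mul_assoc,
      Matrix.nonsing_inv_mul P uP, one_mul]
  have hKP : (K • P⁻¹).PosDef := aux_pd_smul hP.inv hK0
  have i1 := hKP.isUnit.invertible
  have i2 := hJ.inv.isUnit.invertible
  have b1 := (PosDef.fromBlocks₂₂ (K • P⁻¹) (1 : Matrix n n ℂ) hJ.inv).2 (by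
    simpa [Matrix.nonsing_inv_nonsing_inv J uJ] using e3)
  have b2 := (PosDef.fromBlocks₁₁ (1 : Matrix n n ℂ) J⁻¹ hKP).1 b1
  have e4 : (K • P⁻¹)⁻¹ = K⁻¹ • P := by
    apply Matrix.inv_eq_right_inv
    rw [smul_mul_smul_comm, Matrix.nonsing_inv_mul P uP, mul_inv_cancel₀ hK0.ne', one_smul]
  rw [e4] at b2
  unfold LoewnerLE hmean
  rw [← hPd, ← hJd]
  simpa using b2

lemma psd_limit (X Y : Matrix n n ℂ) (hY : Y.PosSemidef) (K : ℝ)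
    (h : ∀ L, K < L → (L • Y - X).PosSemidef) : (K • Y - X).PosSemidef := by
  have hX : X.IsHermitian := by
    have h1 := (h (K+1) (by linarith)).1
    have h2 := (aux_psd_smul hY (r := |K+1|) (abs_nonneg _)).1
    have h3 : ((K+1) • Y).IsHermitian := by
      unfold Matrix.IsHermitian
      rw [conjTranspose_smul, hY.1, star_trivial]
    simpa using h3.sub h1
  have hKY : (K • Y).IsHermitian := by
    unfold Matrix.IsHermitian
    rw [conjTranspose_smul, hY.1, star_trivial]
  refine PosSemidef.of_dotProduct_mulVec_nonneg (hKY.sub hX) fun x => ?_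
  have e : ∀ L : ℝ, star x ⬝ᵥ ((L • Y - X) *ᵥ x) =
      (L : ℂ) * (star x ⬝ᵥ (Y *ᵥ x)) - star x ⬝ᵥ (X *ᵥ x) := fun L => by
    rw [sub_mulVec, smul_mulVec, dotProduct_sub, dotProduct_smul, Complex.real_smul]
  have hl : Filter.Tendsto (fun L : ℝ => (L : ℂ) * (star x ⬝ᵥ (Y *ᵥ x)) - star x ⬝ᵥ (X *ᵥ x))
      (nhdsWithin K (Set.Ioi K)) (nhds ((K : ℂ) * (star x ⬝ᵥ (Y *ᵥ x)) - star x ⬝ᵥ (X *ᵥ x))) := by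
    apply Filter.Tendsto.mono_left _ nhdsWithin_le_nhds
    apply Continuous.tendsto
    fun_prop
  rw [e]
  refine ge_of_tendsto hl ?_
  filter_upwards [self_mem_nhdsWithin] with L hL
  rw [← e]
  exact (h L hL).dotProduct_mulVec_nonneg x

lemma cfc_scal {g : ℝ → ℝ} (hg : OpAntitone g) (P : Matrix n n ℂ) (hP : P.PosDef)
    (K L : ℝ) (hK : 1 ≤ K) (hL : K < L) :
    cfc g P ≤ L • cfc g (K • P) := by
  have h1 : cfc g (K • P) = cfc (fun x => g (K * x)) P :=
    (cfc_comp_const_mul K g P ((P.finite_real_spectrum.image _).continuousOn g) hP.1).symm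
  rw [h1, ← cfc_const_mul L _ P (aux_cont _ P)]
  refine cfc_mono (fun x hx => ?_) (aux_cont _ P) (aux_cont _ P)
  rw [hP.1.spectrum_real_eq_range_eigenvalues] at hx
  obtain ⟨i, rfl⟩ := hx
  exact g_scal hg _ K L (hP.eigenvalues_pos i) hK hL

lemma psd_g {g : ℝ → ℝ} (hg : OpAntitone g) (X : Matrix n n ℂ) (hX : X.PosDef) :
    (cfc g X).PosSemidef := by
  refine Matrix.nonneg_iff_posSemidef.1 (cfc_nonneg fun x hx => ?_)
  rw [hX.1.spectrum_real_eq_range_eigenvalues] at hx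
  obtain ⟨i, rfl⟩ := hx
  exact hg.2.1 _ (hX.eigenvalues_pos i)

end aux

theorem polya_szego_antitone_st_ge_one {n m : Type} [Fintype n] [DecidableEq n] [Fintype m] [DecidableEq m]
    (Φ : Matrix n n ℂ →ₗ[ℂ] Matrix m m ℂ)
    (hΦ : ∀ X : Matrix n n ℂ, X.PosSemidef → (Φ X).PosSemidef)
    (g : ℝ → ℝ) (hg : OpAntitone g)
    (A B : Matrix n n ℂ) (hA : A.PosDef) (hB : B.PosDef)
    (s t : ℝ) (hs : 0 < s) (hst : s ≤ t) (h1 : 1 ≤ s * t)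
    (hsA : LoewnerLE (s • A) B) (htA : LoewnerLE B (t • A)) :
    LoewnerLE (Φ (cfc g (hmean A B)))
      ((((Real.sqrt s + Real.sqrt t) / 2) ^ 2) • ((2 : ℝ)⁻¹ • (Φ (cfc g A) + Φ (cfc g B)))) := by
  have ht : 0 < t := by linarith
  obtain ⟨K, hK⟩ : ∃ K, K = ((Real.sqrt s + Real.sqrt t) / 2) ^ 2 := ⟨_, rfl⟩
  have hle := hm_le A B hA hB s t hs hst h1 hsA htA
  have hr1 : 1 ≤ Real.sqrt s * Real.sqrt t := by
    rw [← Real.sqrt_mul hs.le]; exact Real.one_le_sqrt.2 h1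
  have hK1 : 1 ≤ K := by
    rw [hK]
    nlinarith [sq_nonneg (Real.sqrt s - Real.sqrt t)]
  have hK0 : 0 < K := by linarith
  rw [← hK] at hle ⊢
  obtain ⟨P, hPd⟩ : ∃ P, P = (2:ℝ)⁻¹ • (A + B) := ⟨_, rfl⟩
  rw [← hPd] at hle
  have hP : P.PosDef := hPd ▸ aux_pd_smul (hA.add hB) (by norm_num)
  have hKP : (K⁻¹ • P).PosDef := aux_pd_smul hP (by positivity)
  have hH : (hmean A B).PosDef := by
    unfold hmean
    exact (aux_pd_smul (hA.inv.add hB.inv) (by norm_num)).inv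
  have g1 := hg.2.2 n _ _ hKP hH hle
  have psdg := psd_g (n := n) hg
  have hY : ((2:ℝ)⁻¹ • (cfc g A + cfc g B)).PosSemidef :=
    aux_psd_smul ((psdg A hA).add (psdg B hB)) (by norm_num)
  have main : (K • ((2:ℝ)⁻¹ • (cfc g A + cfc g B)) - cfc g (hmean A B)).PosSemidef := by
    refine psd_limit _ _ hY K fun L hL => ?_
    have hM : 1 ≤ (K + L) / 2 := by linarith
    have g2 := cfc_scal hg (K⁻¹ • P) hKP ((K + L) / 2) L hM (by linarith)
    have he : 0 < (L - K) / (2 * K) := div_pos (by linarith) (by linarith)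
    have g3 := g_conv hg A B hA hB (Real.sqrt ((L - K) / (2 * K))) (Real.sqrt_pos.2 he)
    rw [Real.sq_sqrt he.le, ← hPd] at g3
    rw [smul_smul] at g2
    have e : (K + L) / 2 * K⁻¹ = 1 + (L - K) / (2 * K) := by field_simp; ring
    rw [e] at g2
    rw [Matrix.le_iff] at g2
    have g4 := aux_psd_smul g3 (r := L) (by linarith)
    have := (g1.add g2).add g4
    convert this using 1
    module
  have fin := hΦ _ main
  unfold LoewnerLE
  convert fin using 1
  rw [map_sub, LinearMap.map_smul_of_tower, LinearMap.map_smul_of_tower, map_add]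
end

section
/- Let Φ be a positive linear map from n×n to m×m complex matrices, let g : ℝ → ℝ be operator monotone decreasing on (0,∞), and let A, B be positive definite n×n complex matrices with s·A ≤ B ≤ t·A for some scalars 0 < s ≤ t with s·t ≤ 1. Then Φ(g(A ! B)) ≤ ((√s+√t)/(2√(st)))²·(Φ(g(A)) + Φ(g(B)))/2. -/
open Matrix ComplexOrder

section helpers
open scoped MatrixOrder

theorem ps_exists_poly (g : ℝ → ℝ) {F : Set ℝ} (hF : F.Finite) :
    ∃ p : Polynomial ℝ, ∀ x ∈ F, p.eval x = g x := by
  classical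
  refine ⟨Lagrange.interpolate hF.toFinset id g, fun x hx => ?_⟩
  have := Lagrange.eval_interpolate_at_node (s := hF.toFinset) (v := id) (i := x) g
    (Function.injective_id.injOn) (by simpa using hx)
  simpa using this

theorem ps_cfc_poly {k : Type} [Fintype k] [DecidableEq k] {X : Matrix k k ℂ} (hX : X.IsHermitian)
    (g : ℝ → ℝ) (p : Polynomial ℝ) (h : ∀ x ∈ spectrum ℝ X, p.eval x = g x) :
    cfc g X = Polynomial.aeval X p := by
  rw [← cfc_polynomial p X hX.isSelfAdjoint]
  exact cfc_congr fun x hx => (h x hx).symm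

theorem ps_aeval_intertwine {k l : Type} [Fintype k] [DecidableEq k] [Fintype l] [DecidableEq l]
    (X : Matrix k k ℂ) (A : Matrix l l ℂ) (V : Matrix k l ℂ) (h : X * V = V * A)
    (p : Polynomial ℝ) : Polynomial.aeval X p * V = V * Polynomial.aeval A p := by
  have hp : ∀ i : ℕ, X ^ i * V = V * A ^ i := by
    intro i
    induction i with
    | zero => simp
    | succ i ih => rw [pow_succ', Matrix.mul_assoc, ih, ← Matrix.mul_assoc, h, Matrix.mul_assoc,
        ← pow_succ']
  induction p using Polynomial.induction_on' with
  | add p q hp hq => simp [Matrix.add_mul, Matrix.mul_add, hp, hq]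
  | monomial i a =>
    rw [Polynomial.aeval_monomial, Polynomial.aeval_monomial, ← Algebra.smul_def,
      ← Algebra.smul_def, Matrix.smul_mul, Matrix.mul_smul, hp]

theorem ps_intertwine {k l : Type} [Fintype k] [DecidableEq k] [Fintype l] [DecidableEq l]
    (g : ℝ → ℝ)
    {X : Matrix k k ℂ} {A : Matrix l l ℂ} (hX : X.IsHermitian) (hA : A.IsHermitian)
    (V : Matrix k l ℂ) (h : X * V = V * A) :
    cfc g X * V = V * cfc g A := by
  obtain ⟨p, hp⟩ := ps_exists_poly g (X.finite_real_spectrum.union A.finite_real_spectrum)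
  rw [ps_cfc_poly hX g p fun x hx => hp x (Or.inl hx),
    ps_cfc_poly hA g p fun x hx => hp x (Or.inr hx)]
  exact ps_aeval_intertwine X A V h p

theorem ps_cfc_blocks {k : Type} [Fintype k] [DecidableEq k]
    (g : ℝ → ℝ) {S T : Matrix k k ℂ} (hS : S.IsHermitian) (hT : T.IsHermitian) :
    cfc g (fromBlocks S 0 0 T) = fromBlocks (cfc g S) 0 0 (cfc g T) := by
  have hX : (fromBlocks S 0 0 T).IsHermitian := hS.fromBlocks (by simp) hT
  have h1 := ps_intertwine g hX hS (fromRows 1 0) (by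
    simp [fromBlocks_mul_fromRows])
  have h2 := ps_intertwine g hX hT (fromRows 0 1) (by
    simp [fromBlocks_mul_fromRows])
  rw [← fromBlocks_toBlocks (cfc g (fromBlocks S 0 0 T))] at h1 h2 ⊢
  simp only [fromBlocks_mul_fromRows, fromRows_mul, Matrix.mul_one, Matrix.mul_zero,
    Matrix.one_mul, Matrix.zero_mul, add_zero, zero_add, fromRows_inj.eq_iff] at h1 h2
  rw [h1.1, h1.2, h2.1, h2.2]

theorem ps_fromBlocks_sub {k : Type} (A B C D A' B' C' D' : Matrix k k ℂ) :
    fromBlocks A B C D - fromBlocks A' B' C' D' =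
      fromBlocks (A - A') (B - B') (C - C') (D - D') := by
  rw [sub_eq_add_neg, fromBlocks_neg, fromBlocks_add]
  simp only [sub_eq_add_neg]

theorem ps_posDef_blocks {k : Type} [Fintype k] [DecidableEq k]
    {S T : Matrix k k ℂ} (hS : S.PosDef) (hT : T.PosDef) :
    (fromBlocks S 0 0 T).PosDef := by
  have : (fromBlocks S 0 0 T).PosSemidef := by
    let _ := hS.isUnit.invertible
    have := (PosDef.fromBlocks₁₁ (A := S) 0 T hS).2 (by simpa using hT.posSemidef)
    simpa using this
  refine this.posDef_iff_isUnit.2 ?_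
  exact isUnit_fromBlocks_zero₂₁.2 ⟨hS.isUnit, hT.isUnit⟩

theorem ps_psd_rsmul {k : Type} {S : Matrix k k ℂ} (hS : S.PosSemidef) {c : ℝ} (hc : 0 ≤ c) :
    (c • S).PosSemidef := by
  exact hS.smul hc

theorem ps_pd_rsmul {k : Type} {S : Matrix k k ℂ} (hS : S.PosDef) {c : ℝ} (hc : 0 < c) :
    (c • S).PosDef := by
  exact hS.smul hc

theorem ps_cfc_psd {k : Type} [Fintype k] [DecidableEq k] {g : ℝ → ℝ}
    (hg : ∀ x : ℝ, 0 < x → 0 ≤ g x) {S : Matrix k k ℂ} (hS : S.PosDef) : (cfc g S).PosSemidef := by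
  rw [← nonneg_iff_posSemidef]
  refine cfc_nonneg fun x hx => hg x ?_
  have := (isStrictlyPositive_iff_posDef.2 hS)
  exact this.spectrum_pos hx

theorem ps_HP {k : Type} [Fintype k] [DecidableEq k] {g : ℝ → ℝ} (hg : OpAntitone g)
    {S T : Matrix k k ℂ} (hS : S.PosDef) (hT : T.PosDef) (a b : ℝ) (hab : a ^ 2 + b ^ 2 = 1)
    {ε : ℝ} (hε : 0 < ε) :
    ∃ D : Matrix k k ℂ, D.PosDef ∧
      (fromBlocks (a ^ 2 • cfc g S + b ^ 2 • cfc g T - cfc g ((1 + ε) • (a ^ 2 • S + b ^ 2 • T)))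
        ((a * b) • (cfc g S - cfc g T)) ((a * b) • (cfc g S - cfc g T))
        (b ^ 2 • cfc g S + a ^ 2 • cfc g T - cfc g D)).PosSemidef := by
  set P := a ^ 2 • S + b ^ 2 • T with hPd
  set R := b ^ 2 • S + a ^ 2 • T with hRd
  set Q := (a * b) • (S - T) with hQd
  set U : Matrix (k ⊕ k) (k ⊕ k) ℂ := fromBlocks (a • 1) (-b • 1) (b • 1) (a • 1) with hU
  have hUH : Uᴴ = fromBlocks (a • 1) (b • 1) (-b • 1) (a • 1) := by
    simp [hU, fromBlocks_conjTranspose, conjTranspose_smul]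
  have hUU : U * Uᴴ = 1 := by
    rw [hUH, hU, fromBlocks_multiply, ← fromBlocks_one]
    congr 1 <;> simp only [Matrix.smul_mul, Matrix.mul_smul, Matrix.mul_one, smul_smul, ← add_smul]
    · rw [show a * a + -b * -b = a^2+b^2 by ring, hab, one_smul]
    · rw [show b * a + a * -b = 0 by ring, zero_smul]
    · rw [show a * b + -b * a = 0 by ring, zero_smul]
    · rw [show b * b + a * a = a^2+b^2 by ring, hab, one_smul]
  have hform : ∀ M N : Matrix k k ℂ, U * fromBlocks M 0 0 N * Uᴴ =
      fromBlocks (a ^ 2 • M + b ^ 2 • N) ((a * b) • (M - N)) ((a * b) • (M - N))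
        (b ^ 2 • M + a ^ 2 • N) := by
    intro M N
    rw [hUH, hU, fromBlocks_multiply, fromBlocks_multiply]
    congr 1 <;> simp only [Matrix.smul_mul, Matrix.mul_smul, Matrix.mul_one, Matrix.one_mul, 
      Matrix.mul_zero, Matrix.zero_mul, smul_zero, add_zero, zero_add] <;> module
  have hUu : IsUnit U := by
    refine isUnit_iff_isUnit_det _ |>.2 ?_
    exact isUnit_det_of_right_inverse hUU
  have hXpd := ps_posDef_blocks hS hT
  have hYpd : (U * fromBlocks S 0 0 T * Uᴴ).PosDef := by
    have := hUu.posDef_star_right_conjugate_iff (x := fromBlocks S 0 0 T) |>.2 hXpd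
    simpa [star_eq_conjTranspose] using this
  have hUU' : Uᴴ * U = 1 := mul_eq_one_comm.1 hUU
  have hgY : cfc g (U * fromBlocks S 0 0 T * Uᴴ) =
      U * fromBlocks (cfc g S) 0 0 (cfc g T) * Uᴴ := by
    rw [← ps_cfc_blocks g hS.1 hT.1, ← ps_intertwine g hYpd.1 hXpd.1 U
      (by rw [Matrix.mul_assoc, hUU', Matrix.mul_one]), Matrix.mul_assoc (cfc g _), hUU, Matrix.mul_one]
  rw [hform] at hYpd
  rw [hform, hform] at hgY
  have hPpd : P.PosDef := by
    rcases eq_or_ne a 0 with ha | ha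
    · have : b ^ 2 = 1 := by simpa [ha] using hab
      simpa [hPd, ha, this] using hT
    · exact (ps_pd_rsmul hS (by positivity)).add_posSemidef (ps_psd_rsmul hT.posSemidef (sq_nonneg b))
  have hRpd : R.PosDef := by
    rcases eq_or_ne b 0 with ha | ha
    · have : a ^ 2 = 1 := by simpa [ha] using hab
      simpa [hRd, ha, this] using hT
    · exact (ps_pd_rsmul hS (by positivity)).add_posSemidef (ps_psd_rsmul hT.posSemidef (sq_nonneg a))
  have hQH : Qᴴ = Q := by
    simp [hQd, conjTranspose_smul, hS.1.eq, hT.1.eq]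
  have hεP := ps_pd_rsmul hPpd hε
  set D := R + Qᴴ * (ε • P)⁻¹ * Q with hD
  have hDpd : D.PosDef := hRpd.add_posSemidef (hεP.inv.posSemidef.conjTranspose_mul_mul_same Q)
  have h1P := ps_pd_rsmul hPpd (show 0 < 1 + ε by linarith)
  have key := hg.2.2 (k ⊕ k) (fromBlocks P Q Q R) _ hYpd (ps_posDef_blocks h1P hDpd) (by
    unfold LoewnerLE
    rw [ps_fromBlocks_sub]
    let _ := hεP.isUnit.invertible
    have h := (PosDef.fromBlocks₁₁ (A := ε • P) (-Q) (D - R) hεP).2 (by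
      have : D - R - (-Q)ᴴ * (ε • P)⁻¹ * (-Q) = 0 := by
        rw [hD]; simp
      rw [this]; exact PosSemidef.zero)
    have e1 : (1 + ε) • P - P = ε • P := by rw [add_smul, one_smul, add_sub_cancel_left]
    rw [conjTranspose_neg, hQH] at h
    rw [e1, zero_sub]
    exact h)
  refine ⟨D, hDpd, ?_⟩
  unfold LoewnerLE at key
  rw [hgY, ps_cfc_blocks g h1P.1 hDpd.1, ps_fromBlocks_sub] at key
  simpa using key

theorem ps_convex {k : Type} [Fintype k] [DecidableEq k] {g : ℝ → ℝ} (hg : OpAntitone g)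
    {S T : Matrix k k ℂ} (hS : S.PosDef) (hT : T.PosDef) {ε : ℝ} (hε : 0 < ε) :
    ((2 : ℝ)⁻¹ • (cfc g S + cfc g T) - cfc g ((1 + ε) • ((2 : ℝ)⁻¹ • (S + T)))).PosSemidef := by
  have h2 : (Real.sqrt 2⁻¹) ^ 2 = (2 : ℝ)⁻¹ := Real.sq_sqrt (by norm_num)
  obtain ⟨D, -, h⟩ := ps_HP hg hS hT (Real.sqrt 2⁻¹) (Real.sqrt 2⁻¹) (by rw [h2]; norm_num) hε
  have h' := h.submatrix Sum.inl
  rw [h2, ← smul_add, ← smul_add] at h'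
  exact h'

theorem ps_scale {k : Type} [Fintype k] [DecidableEq k] {g : ℝ → ℝ} (hg : OpAntitone g)
    {A : Matrix k k ℂ} (hA : A.PosDef) {d δ : ℝ} (hd : 1 ≤ d) (hδ : 0 < δ) :
    ((d * (1 + δ)) • cfc g (d • A) - cfc g A).PosSemidef := by
  have hd0 : 0 < d := by linarith
  have hdd : 1 < d * (1 + δ) := by nlinarith
  set x := (d * (1 + δ))⁻¹ with hx
  have hx0 : 0 < x := by positivity
  have hx1 : x < 1 := inv_lt_one_of_one_lt₀ hdd
  have hy0 : 0 < 1 - x := by linarith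
  have ha : (Real.sqrt x) ^ 2 = x := Real.sq_sqrt hx0.le
  have hb : (Real.sqrt (1 - x)) ^ 2 = 1 - x := Real.sq_sqrt hy0.le
  set a := Real.sqrt x
  set b := Real.sqrt (1 - x)
  set μ := (δ / (2 * (1 + δ))) / (1 - x) with hμ
  have hμ0 : 0 < μ := by positivity
  obtain ⟨D, hD, h⟩ := ps_HP hg (ps_pd_rsmul hA hd0) (ps_pd_rsmul hA hμ0) a b
    (by rw [ha, hb]; ring) (show 0 < δ / (2 + δ) by positivity)
  have hP : (1 + δ / (2 + δ)) • (a ^ 2 • d • A + b ^ 2 • μ • A) = A := by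
    rw [smul_smul, smul_smul, ← add_smul, smul_smul, ha, hb]
    have e1 : (1 - x) * μ = δ / (2 * (1 + δ)) := by rw [hμ]; field_simp
    have e2 : x * d = 1 / (1 + δ) := by rw [hx]; field_simp
    rw [e1, e2]
    have : (1 + δ / (2 + δ)) * (1 / (1 + δ) + δ / (2 * (1 + δ))) = 1 := by field_simp; ring
    rw [this, one_smul]
  rw [hP] at h
  have hV := h.conjTranspose_mul_mul_same (fromRows (a • 1 : Matrix k k ℂ) (b • 1))
  have hD' := ps_psd_rsmul (ps_cfc_psd hg.2.1 hD) (sq_nonneg b)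
  have hs := ps_psd_rsmul (hV.add hD') (inv_nonneg.2 hx0.le)
  convert hs using 1
  rw [Matrix.mul_assoc, fromBlocks_mul_fromRows, conjTranspose_fromRows_eq_fromCols_conjTranspose,
    fromCols_mul_fromRows]
  have hxx : x⁻¹ = d * (1 + δ) := by rw [hx, inv_inv]
  simp only [conjTranspose_smul, conjTranspose_one, star_trivial, Matrix.smul_mul, Matrix.mul_smul,
    Matrix.mul_one, Matrix.one_mul]
  rw [← hxx]
  generalize cfc g (d • A) = X
  generalize cfc g (μ • A) = Y
  generalize cfc g A = Z
  generalize cfc g D = W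
  have e : X = (a ^ 2 + b ^ 2) ^ 2 • X := by rw [ha, hb]; simp
  have e' : Z = x⁻¹ • a ^ 2 • Z := by rw [ha, smul_smul, inv_mul_cancel₀ hx0.ne', one_smul]
  nth_rewrite 1 [e, e']
  module

theorem ps_harm {k : Type} [Fintype k] [DecidableEq k] {A B : Matrix k k ℂ} (hA : A.PosDef)
    (hB : B.PosDef) {s : ℝ} (hs : 0 < s) (hs1 : s ≤ 1) (hM : (A - s • B).PosSemidef)
    (hN : (B - s • A).PosSemidef) :
    (hmean A B - (4 * s / (1 + s) ^ 2) • ((2 : ℝ)⁻¹ • (A + B))).PosSemidef := by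
  set W := A + B with hW
  have hWpd : W.PosDef := hA.add hB
  have hWu : IsUnit W.det := (isUnit_iff_isUnit_det _).1 hWpd.isUnit
  have hAu : IsUnit A.det := (isUnit_iff_isUnit_det _).1 hA.isUnit
  have hBu : IsUnit B.det := (isUnit_iff_isUnit_det _).1 hB.isUnit
  set J := A * W⁻¹ * B with hJ
  have hAA : A * W⁻¹ * A = A - J := by
    rw [hJ, eq_sub_iff_add_eq, ← Matrix.mul_add, ← hW, nonsing_inv_mul_cancel_right _ _ hWu]
  have hBA : B * W⁻¹ * A = J := by
    have : A * W⁻¹ * A + B * W⁻¹ * A = A := by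
      rw [← Matrix.add_mul, ← Matrix.add_mul, ← hW, mul_nonsing_inv _ hWu, Matrix.one_mul]
    rw [hAA] at this
    rw [sub_add_eq_add_sub, sub_eq_iff_eq_add] at this
    exact add_left_cancel this
  have hBB : B * W⁻¹ * B = B - J := by
    rw [← hBA, eq_sub_iff_add_eq, ← Matrix.mul_add, add_comm B A, ← hW,
      nonsing_inv_mul_cancel_right _ _ hWu]
  have hH : hmean A B = (2 : ℝ) • J := by
    unfold hmean
    refine inv_eq_left_inv ?_
    have e1 : J * A⁻¹ = B * W⁻¹ := by rw [← hBA, mul_nonsing_inv_cancel_right _ _ hAu]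
    have e2 : J * B⁻¹ = A * W⁻¹ := by rw [hJ, mul_nonsing_inv_cancel_right _ _ hBu]
    rw [Matrix.smul_mul, Matrix.mul_smul, smul_smul, Matrix.mul_add, e1, e2, ← Matrix.add_mul,
      add_comm B A, ← hW, mul_nonsing_inv _ hWu]
    norm_num
  set M := A - s • B with hMd
  set N := B - s • A with hNd
  have hMN : M * W⁻¹ * N = (1 + s) ^ 2 • J - s • W := by
    have : M * W⁻¹ * N = A * W⁻¹ * B - s • (A * W⁻¹ * A) - s • (B * W⁻¹ * B)
        + s ^ 2 • (B * W⁻¹ * A) := by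
      rw [hMd, hNd]
      simp only [Matrix.sub_mul, Matrix.mul_sub, Matrix.smul_mul, Matrix.mul_smul]
      module
    rw [this, hAA, hBB, hBA, ← hJ, hW]
    module
  have hNM : N * W⁻¹ * M = M * W⁻¹ * N := by
    have : N * W⁻¹ * M = B * W⁻¹ * A - s • (A * W⁻¹ * A) - s • (B * W⁻¹ * B)
        + s ^ 2 • (A * W⁻¹ * B) := by
      rw [hMd, hNd]
      simp only [Matrix.sub_mul, Matrix.mul_sub, Matrix.smul_mul, Matrix.mul_smul]
      module
    rw [this, hMN, hAA, hBB, hBA, ← hJ, hW]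
    module
  have hpos : (M * W⁻¹ * N).PosSemidef := by
    rcases hs1.eq_or_lt with h | h
    · have hz : M = 0 := by
        have e : N = -M := by rw [hMd, hNd, h]; module
        have h1 : (0 : Matrix k k ℂ) ≤ M := nonneg_iff_posSemidef.2 hM
        have h2 : (0 : Matrix k k ℂ) ≤ -M := by rw [← e]; exact nonneg_iff_posSemidef.2 hN
        exact le_antisymm (neg_nonneg.1 h2) h1
      rw [hz]; simpa using PosSemidef.zero
    · have hsum : M + N = (1 - s) • W := by rw [hMd, hNd, hW]; module
      have p1 := hN.conjTranspose_mul_mul_same (W⁻¹ * M)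
      have p2 := hM.conjTranspose_mul_mul_same (W⁻¹ * N)
      have hp := ps_psd_rsmul (p1.add p2) (show 0 ≤ (1 - s)⁻¹ by
        rw [inv_nonneg]; linarith)
      convert hp using 1
      rw [conjTranspose_mul, conjTranspose_mul, hM.1.eq, hN.1.eq, hWpd.inv.1.eq]
      have q1 : M * W⁻¹ * N * (W⁻¹ * M) = M * W⁻¹ * (M * W⁻¹ * N) := by
        rw [← Matrix.mul_assoc, Matrix.mul_assoc (M * W⁻¹), Matrix.mul_assoc (M * W⁻¹), hNM]
      have q2 : N * W⁻¹ * M * (W⁻¹ * N) = M * W⁻¹ * (N * W⁻¹ * N) := by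
        rw [hNM]; simp only [Matrix.mul_assoc]
      rw [q1, q2, ← Matrix.mul_add, ← Matrix.add_mul, ← Matrix.add_mul, hsum, Matrix.smul_mul,
        Matrix.smul_mul, mul_nonsing_inv _ hWu, Matrix.one_mul, Matrix.mul_smul, smul_smul,
        inv_mul_cancel₀ (by linarith), one_smul]
  have hfin := ps_psd_rsmul hpos (show 0 ≤ 2 / (1 + s) ^ 2 by positivity)
  convert hfin using 1
  rw [hMN, hH, smul_sub, smul_smul, smul_smul, smul_smul]
  have : (1 + s) ^ 2 ≠ 0 := by positivity
  congr 2 <;> field_simp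
  norm_num

theorem ps_limit {k : Type} [Fintype k] [DecidableEq k] {M N : Matrix k k ℂ} (c : ℝ)
    (hM : M.IsHermitian) (hN : N.IsHermitian)
    (h : ∀ ε : ℝ, 0 < ε → ((c * (1 + ε) * (1 + ε)) • M - N).PosSemidef) :
    (c • M - N).PosSemidef := by
  refine PosSemidef.of_dotProduct_mulVec_nonneg ?_ fun x => ?_
  · exact (IsSelfAdjoint.smul (IsSelfAdjoint.all c) hM.isSelfAdjoint).sub hN
  have hc : Filter.Tendsto (fun ε : ℝ => (c * (1 + ε) * (1 + ε)) • (star x ⬝ᵥ (M *ᵥ x))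
      - (star x ⬝ᵥ (N *ᵥ x))) (nhdsWithin 0 (Set.Ioi 0))
      (nhds ((c * (1 + 0) * (1 + 0)) • (star x ⬝ᵥ (M *ᵥ x)) - (star x ⬝ᵥ (N *ᵥ x)))) := by
    refine Filter.Tendsto.mono_left ?_ nhdsWithin_le_nhds
    exact Continuous.tendsto (by fun_prop) _
  have := ge_of_tendsto hc (b := 0) (by
    filter_upwards [self_mem_nhdsWithin] with ε hε
    have := (h ε hε).dotProduct_mulVec_nonneg x
    simpa [sub_mulVec, smul_mulVec, dotProduct_sub, dotProduct_smul] using this)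
  simpa [sub_mulVec, smul_mulVec, dotProduct_sub, dotProduct_smul] using this
end helpers


theorem polya_szego_antitone_st_le_one {n m : Type} [Fintype n] [DecidableEq n] [Fintype m] [DecidableEq m]
    (Φ : Matrix n n ℂ →ₗ[ℂ] Matrix m m ℂ)
    (hΦ : ∀ X : Matrix n n ℂ, X.PosSemidef → (Φ X).PosSemidef)
    (g : ℝ → ℝ) (hg : OpAntitone g)
    (A B : Matrix n n ℂ) (hA : A.PosDef) (hB : B.PosDef)
    (s t : ℝ) (hs : 0 < s) (hst : s ≤ t) (h1 : s * t ≤ 1)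
    (hsA : LoewnerLE (s • A) B) (htA : LoewnerLE B (t • A)) :
    LoewnerLE (Φ (cfc g (hmean A B)))
      ((((Real.sqrt s + Real.sqrt t) / (2 * Real.sqrt (s * t))) ^ 2) •
        ((2 : ℝ)⁻¹ • (Φ (cfc g A) + Φ (cfc g B)))) := by
  classical
  set K := ((Real.sqrt s + Real.sqrt t) / (2 * Real.sqrt (s * t))) ^ 2 with hK
  have ht : 0 < t := hs.trans_le hst
  have hs1 : s ≤ 1 := by nlinarith
  have hKs : (1 + s) ^ 2 / (4 * s) ≤ K := by
    have e : (1 + s) ^ 2 / (4 * s) = ((1 + s) / (2 * Real.sqrt s)) ^ 2 := by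
      rw [div_pow, mul_pow, Real.sq_sqrt hs.le]; norm_num
    rw [e, hK]
    have hss : 0 < Real.sqrt s := Real.sqrt_pos.2 hs
    have htt : 0 < Real.sqrt t := Real.sqrt_pos.2 ht
    refine pow_le_pow_left₀ (by positivity) ?_ 2
    rw [Real.sqrt_mul hs.le, div_le_div_iff₀ (by positivity) (by positivity)]
    have h3 : Real.sqrt s * Real.sqrt t ≤ 1 := by
      rw [← Real.sqrt_mul hs.le]; exact Real.sqrt_le_one.2 h1
    have h4 : s * Real.sqrt t ≤ Real.sqrt s := by
      nth_rewrite 1 [← Real.mul_self_sqrt hs.le]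
      nlinarith
    have : (1 + s) * Real.sqrt t ≤ Real.sqrt s + Real.sqrt t := by linarith
    nlinarith [mul_le_mul_of_nonneg_left this (show 0 ≤ 2 * Real.sqrt s by positivity)]
  have hK1 : 1 ≤ K := by
    refine le_trans ?_ hKs
    rw [le_div_iff₀ (by positivity)]
    nlinarith [sq_nonneg (1 - s)]
  have hK0 : 0 < K := by linarith
  have hM : (A - s • B).PosSemidef := by
    have e : A - s • B = s • (t • A - B) + (1 - s * t) • A := by module
    rw [e]
    exact (ps_psd_rsmul htA hs.le).add (ps_psd_rsmul hA.posSemidef (by linarith))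
  have hH := ps_harm hA hB hs hs1 hM hsA
  set P := (2 : ℝ)⁻¹ • (A + B) with hP
  have hPpd : P.PosDef := ps_pd_rsmul (hA.add hB) (by norm_num)
  have hHpd : (hmean A B).PosDef := by
    unfold hmean
    exact (ps_pd_rsmul (hA.inv.add hB.inv) (by norm_num)).inv
  have hle : LoewnerLE (K⁻¹ • P) (hmean A B) := by
    unfold LoewnerLE
    have e : hmean A B - K⁻¹ • P = (hmean A B - (4 * s / (1 + s) ^ 2) • P)
      + (4 * s / (1 + s) ^ 2 - K⁻¹) • P := by module
    rw [e]
    refine hH.add (ps_psd_rsmul hPpd.posSemidef ?_)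
    rw [sub_nonneg, ← inv_div]
    exact inv_anti₀ (by positivity) hKs
  have hXpd : (K⁻¹ • P).PosDef := ps_pd_rsmul hPpd (by positivity)
  have g1 := hg.2.2 n _ _ hXpd hHpd hle
  unfold LoewnerLE at g1
  have main : (K • ((2 : ℝ)⁻¹ • (cfc g A + cfc g B)) - cfc g (hmean A B)).PosSemidef := by
    refine ps_limit K (ps_psd_rsmul ((ps_cfc_psd hg.2.1 hA).add (ps_cfc_psd hg.2.1 hB))
      (by norm_num)).1 (ps_cfc_psd hg.2.1 hHpd).1 fun ε hε => ?_
    have g2 := ps_scale hg hXpd (d := K * (1 + ε)) (δ := ε) (by nlinarith) hε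
    have e : (K * (1 + ε)) • K⁻¹ • P = (1 + ε) • P := by
      rw [smul_smul]; congr 1; field_simp
    rw [e] at g2
    have g3 := ps_psd_rsmul (ps_convex hg hA hB hε) (show 0 ≤ K * (1 + ε) * (1 + ε) by positivity)
    rw [← hP] at g3
    convert (g1.add g2).add g3 using 1
    module
  have := hΦ _ main
  unfold LoewnerLE
  rwa [map_sub, LinearMap.map_smul_of_tower, LinearMap.map_smul_of_tower, map_add] at this
end
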